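/- arXiv:1609.00533 — 5 statements merged into one kernel-verified Lean document; each statement's English description precedes it below -/
import Mathlib

section
/- Let X be a binomial random variable with parameters n and p, where n ≥ 1 and 0 < p < 1, and let q = 1 − p. Then for every real a with 0 ≤ a ≤ np, one has P(X ≤ E X − a) ≤ exp( − a² / ( 2( n p q − a(q−p)/3 ) ) ). -/
/-- Comparison of the second derivatives of the relative entropy and of its Bernstein bound. -/
lemma sq_div_cube_le_inv_add_inv {p x : ℝ} (hp0 : 0 < p) (hp1 : p < 1) (hx0 : 0 ≤ x) (hxp : x < p)
    (hd : 0 < p * (1 - p) + (2 * p - 1) / 3 * x) :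
    (p * (1 - p)) ^ 2 / (p * (1 - p) + (2 * p - 1) / 3 * x) ^ 3
      ≤ 1 / (p - x) + 1 / (1 - p + x) := by
  have hr : 0 < p - x := by linarith
  have hs : 0 < 1 - p + x := by linarith
  have hv : 0 < p * (1 - p) := mul_pos hp0 (by linarith)
  have hsum : 1 / (p - x) + 1 / (1 - p + x) = 1 / ((p - x) * (1 - p + x)) := by
    field_simp
    ring
  rw [hsum, div_le_div_iff₀ (by positivity) (by positivity)]
  have hkey : 0 ≤ x ^ 2 * (((2 * p - 1) / 3) ^ 2 * (2 * (p * (1 - p)) +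
      (p * (1 - p) + (2 * p - 1) / 3 * x)) + (p * (1 - p)) ^ 2) := by positivity
  linear_combination hkey

lemma bernstein_denom_pos {p x : ℝ} (hp0 : 0 < p) (hp1 : p < 1) (hx0 : 0 ≤ x) (hxp : x ≤ p) :
    0 < p * (1 - p) + (2 * p - 1) / 3 * x := by
  have hq : 0 < 1 - p := by linarith
  nlinarith [mul_pos hp0 hq, mul_nonneg hx0 hp0.le, mul_nonneg (sub_nonneg.2 hxp) hq.le,
    mul_nonneg hx0 hq.le]

lemma hasDerivAt_bernstein {v c x : ℝ} (hd : v + c * x ≠ 0) :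
    HasDerivAt (fun y => y ^ 2 / (2 * (v + c * y)))
      (x * (2 * v + c * x) / (2 * (v + c * x) ^ 2)) x := by
  have h1 : HasDerivAt (fun y : ℝ => 2 * (v + c * y)) (2 * (c * 1)) x :=
    (((hasDerivAt_id x).const_mul c).const_add v).const_mul 2
  refine HasDerivAt.congr_deriv ((hasDerivAt_pow 2 x).fun_div h1 (by simpa using hd)) ?_
  field_simp
  ring

lemma hasDerivAt_deriv_bernstein {v c x : ℝ} (hd : v + c * x ≠ 0) :
    HasDerivAt (fun y => y * (2 * v + c * y) / (2 * (v + c * y) ^ 2))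
      (v ^ 2 / (v + c * x) ^ 3) x := by
  have h0 (w : ℝ) : HasDerivAt (fun y : ℝ => w + c * y) (c * 1) x :=
    ((hasDerivAt_id x).const_mul c).const_add w
  have h1 := (hasDerivAt_id x).fun_mul (h0 (2 * v))
  have h2 := ((h0 v).fun_pow 2).const_mul 2
  refine HasDerivAt.congr_deriv (h1.fun_div h2 (by simpa using hd)) ?_
  simp only [id]
  field_simp
  ring

lemma bernstein_deriv_le_entropy_deriv {p x : ℝ} (hp0 : 0 < p) (hp1 : p < 1) (hx0 : 0 ≤ x)
    (hxp : x < p) :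
    x * (2 * (p * (1 - p)) + (2 * p - 1) / 3 * x) /
        (2 * (p * (1 - p) + (2 * p - 1) / 3 * x) ^ 2)
      ≤ Real.log p - Real.log (p - x) + (Real.log (1 - p + x) - Real.log (1 - p)) := by
  set F : ℝ → ℝ := fun y =>
    Real.log p - Real.log (p - y) + (Real.log (1 - p + y) - Real.log (1 - p)) -
      y * (2 * (p * (1 - p)) + (2 * p - 1) / 3 * y) /
        (2 * (p * (1 - p) + (2 * p - 1) / 3 * y) ^ 2) with hF
  have hderiv : ∀ y ∈ Set.Ico 0 p, HasDerivAt F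
      (1 / (p - y) + 1 / (1 - p + y) -
        (p * (1 - p)) ^ 2 / (p * (1 - p) + (2 * p - 1) / 3 * y) ^ 3) y := by
    rintro y ⟨hy0, hyp⟩
    have hr := (((hasDerivAt_id y).const_sub p).log (by simp; linarith)).const_sub (Real.log p)
    have hs := (((hasDerivAt_id y).const_add (1 - p)).log
      (by simp; linarith)).sub_const (Real.log (1 - p))
    refine HasDerivAt.congr_deriv ((hr.fun_add hs).fun_sub
      (hasDerivAt_deriv_bernstein (bernstein_denom_pos hp0 hp1 hy0 hyp.le).ne')) ?_
    simp only [id]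
    ring
  have hmono : MonotoneOn F (Set.Ico 0 p) := by
    refine monotoneOn_of_deriv_nonneg (convex_Ico 0 p)
      (fun y hy => (hderiv y hy).continuousAt.continuousWithinAt) ?_ ?_
    · exact fun y hy => (hderiv y (interior_subset hy)).differentiableAt.differentiableWithinAt
    · intro y hy
      obtain ⟨hy0, hyp⟩ := interior_subset hy
      rw [(hderiv y ⟨hy0, hyp⟩).deriv]
      exact sub_nonneg.2
        (sq_div_cube_le_inv_add_inv hp0 hp1 hy0 hyp (bernstein_denom_pos hp0 hp1 hy0 hyp.le))
  have h := hmono ⟨le_rfl, hp0⟩ ⟨hx0, hxp⟩ hx0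
  simp only [hF, sub_zero, add_zero, sub_self, zero_mul, zero_div] at h
  linarith

/-- Bernstein-type lower bound for the relative entropy of `Bernoulli (p - x)` with respect to
`Bernoulli p`. -/
lemma bernstein_le_entropy {p x : ℝ} (hp0 : 0 < p) (hp1 : p < 1) (hx0 : 0 ≤ x) (hxp : x ≤ p) :
    x ^ 2 / (2 * (p * (1 - p) + (2 * p - 1) / 3 * x))
      ≤ (p - x) * Real.log (p - x) - (p - x) * Real.log p +
        ((1 - p + x) * Real.log (1 - p + x) - (1 - p + x) * Real.log (1 - p)) := by
  set F : ℝ → ℝ := fun y =>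
    (p - y) * Real.log (p - y) - (p - y) * Real.log p +
        ((1 - p + y) * Real.log (1 - p + y) - (1 - p + y) * Real.log (1 - p)) -
      y ^ 2 / (2 * (p * (1 - p) + (2 * p - 1) / 3 * y)) with hF
  have hderiv : ∀ y ∈ Set.Ioo 0 p, HasDerivAt F
      (Real.log p - Real.log (p - y) + (Real.log (1 - p + y) - Real.log (1 - p)) -
        y * (2 * (p * (1 - p)) + (2 * p - 1) / 3 * y) /
          (2 * (p * (1 - p) + (2 * p - 1) / 3 * y) ^ 2)) y := by
    rintro y ⟨hy0, hyp⟩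
    have hr := (hasDerivAt_id y).const_sub p
    have hs := (hasDerivAt_id y).const_add (1 - p)
    have hr' := (Real.hasDerivAt_mul_log (x := p - y) (by linarith)).comp y hr
    have hs' := (Real.hasDerivAt_mul_log (x := 1 - p + y) (by linarith)).comp y hs
    refine HasDerivAt.congr_deriv (((hr'.fun_sub (hr.mul_const (Real.log p))).fun_add
      (hs'.fun_sub (hs.mul_const (Real.log (1 - p))))).fun_sub
      (hasDerivAt_bernstein (bernstein_denom_pos hp0 hp1 hy0.le hyp.le).ne')) ?_
    ring
  have hcont : ContinuousOn F (Set.Icc 0 p) := by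
    have hr : Continuous fun y : ℝ => (p - y) * Real.log (p - y) :=
      Real.continuous_mul_log.comp (continuous_const.sub continuous_id)
    have hs : Continuous fun y : ℝ => (1 - p + y) * Real.log (1 - p + y) :=
      Real.continuous_mul_log.comp (continuous_const.add continuous_id)
    refine ContinuousOn.sub (Continuous.continuousOn (by fun_prop)) fun y hy => ?_
    exact (hasDerivAt_bernstein
      (bernstein_denom_pos hp0 hp1 hy.1 hy.2).ne').continuousAt.continuousWithinAt
  have hmono : MonotoneOn F (Set.Icc 0 p) := by
    refine monotoneOn_of_deriv_nonneg (convex_Icc 0 p) hcont ?_ ?_ <;> rw [interior_Icc]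
    · exact fun y hy => (hderiv y hy).differentiableAt.differentiableWithinAt
    · intro y hy
      rw [(hderiv y hy).deriv]
      exact sub_nonneg.2 (bernstein_deriv_le_entropy_deriv hp0 hp1 hy.1.le hy.2)
  have h := hmono ⟨le_rfl, hp0.le⟩ ⟨hx0, hxp⟩ hx0
  simp only [hF, sub_zero, add_zero, sub_self] at h
  norm_num at h
  linarith

/-- Change of measure: up to the entropy factor, `Bi(n, r)` dominates `Bi(n, p)` at and below its
own mean `n * r`. -/
lemma pow_mul_pow_le_exp_entropy_mul {n k : ℕ} {p r : ℝ} (hp0 : 0 < p) (hp1 : p < 1)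
    (hr0 : 0 ≤ r) (hrp : r ≤ p) (hkn : k ≤ n) (hk : (k : ℝ) ≤ n * r) :
    p ^ k * (1 - p) ^ (n - k) ≤
      Real.exp (-(n * (r * Real.log r - r * Real.log p +
        ((1 - r) * Real.log (1 - r) - (1 - r) * Real.log (1 - p))))) *
      (r ^ k * (1 - r) ^ (n - k)) := by
  have hq : 0 < 1 - p := by linarith
  rcases hr0.eq_or_lt with rfl | hr
  · obtain rfl : k = 0 := by
      have : (k : ℝ) ≤ 0 := by simpa using hk
      exact_mod_cast this.antisymm k.cast_nonneg
    simp [Real.exp_nat_mul, Real.exp_log hq]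
  · have hs : 0 < 1 - r := by linarith
    rw [← Real.log_le_log_iff (by positivity) (by positivity),
      Real.log_mul (by positivity) (by positivity), Real.log_mul (by positivity) (by positivity),
      Real.log_mul (by positivity) (by positivity), Real.log_exp]
    simp only [Real.log_pow, Nat.cast_sub hkn]
    have h1 : Real.log r ≤ Real.log p := Real.log_le_log hr hrp
    have h2 : Real.log (1 - p) ≤ Real.log (1 - r) := Real.log_le_log hq (by linarith)
    nlinarith [mul_nonneg (sub_nonneg.2 hk) (add_nonneg (sub_nonneg.2 h1) (sub_nonneg.2 h2))]

/-- For `X ~ Bi(n,p)`, `q = 1 - p` and `0 ≤ a ≤ np`: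
`P(X ≤ EX - a) ≤ exp(-a² / (2(npq - a(q-p)/3)))`. -/
theorem binomial_lower_tail_bernstein (n : ℕ) (hn : 1 ≤ n) (p : ℝ)
    (hp0 : 0 < p) (hp1 : p < 1) (a : ℝ) (ha0 : 0 ≤ a) (ha1 : a ≤ (n : ℝ) * p) :
    (∑ k ∈ Finset.range (n + 1),
        if (k : ℝ) ≤ (n : ℝ) * p - a then
          (n.choose k : ℝ) * p ^ k * (1 - p) ^ (n - k) else 0)
      ≤ Real.exp (-(a ^ 2 / (2 * ((n : ℝ) * p * (1 - p) - a * ((1 - p) - p) / 3)))) := by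
  have hn0 : (0 : ℝ) < n := by exact_mod_cast hn
  obtain ⟨x, rfl⟩ : ∃ x, a = n * x := ⟨a / n, by field_simp⟩
  have hx0 : 0 ≤ x := nonneg_of_mul_nonneg_right ha0 hn0
  have hxp : x ≤ p := le_of_mul_le_mul_left ha1 hn0
  have hd := bernstein_denom_pos hp0 hp1 hx0 hxp
  have hs : 1 - (p - x) = 1 - p + x := by ring
  have hexponent : (n * x) ^ 2 / (2 * ((n : ℝ) * p * (1 - p) - n * x * ((1 - p) - p) / 3))
      = n * (x ^ 2 / (2 * (p * (1 - p) + (2 * p - 1) / 3 * x))) := by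
    have : (n : ℝ) * p * (1 - p) - n * x * ((1 - p) - p) / 3
        = n * (p * (1 - p) + (2 * p - 1) / 3 * x) := by ring
    rw [this]
    generalize p * (1 - p) + (2 * p - 1) / 3 * x = d at hd
    field_simp
  set D := (p - x) * Real.log (p - x) - (p - x) * Real.log p +
    ((1 - (p - x)) * Real.log (1 - (p - x)) - (1 - (p - x)) * Real.log (1 - p)) with hD
  have hentropy : x ^ 2 / (2 * (p * (1 - p) + (2 * p - 1) / 3 * x)) ≤ D := by
    rw [hD, hs]
    exact bernstein_le_entropy hp0 hp1 hx0 hxp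
  have hr0 : 0 ≤ p - x := by linarith
  have hs0 : 0 ≤ 1 - (p - x) := by linarith
  calc _ ≤ ∑ k ∈ Finset.range (n + 1), Real.exp (-(n * D)) *
        ((p - x) ^ k * (1 - (p - x)) ^ (n - k) * (n.choose k : ℝ)) := by
        refine Finset.sum_le_sum fun k hk => ?_
        split_ifs with hkx
        · have h := pow_mul_pow_le_exp_entropy_mul hp0 hp1 hr0 (by linarith)
            (Finset.mem_range_succ_iff.1 hk) (by linarith : (k : ℝ) ≤ n * (p - x))
          linear_combination (n.choose k : ℝ) * h
        · positivity
    _ = Real.exp (-(n * D)) := by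
        rw [← Finset.mul_sum, ← add_pow]
        simp
    _ ≤ _ := by
        rw [hexponent]
        gcongr
end

section
/- Let X be a binomial random variable with parameters n and p, where n ≥ 1 and 0 < p ≤ 1/2, and let q = 1 − p. Then for every real a ≥ 0, one has P(X ≤ E X − a) ≤ exp( − a² / (2npq) ). -/
open Real in
/-- A first-order bound behind the sub-Gaussian estimate for a Bernoulli variable. -/
lemma exp_mul_one_sub_le {p t : ℝ} (hp0 : 0 ≤ p) (hp1 : p ≤ 1 / 2) (ht : 0 ≤ t) :
    exp t * (1 - (1 - p) * t) ≤ 1 + p * t := by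
  have hderiv (x : ℝ) : HasDerivAt (fun y ↦ 1 + p * y - exp y * (1 - (1 - p) * y))
      (p - exp x * (p - (1 - p) * x)) x := by
    have hlin := ((hasDerivAt_id x).const_mul p).const_add 1
    have hfac := ((hasDerivAt_id x).const_mul (1 - p)).const_sub 1
    refine (hlin.sub ((hasDerivAt_exp x).mul hfac)).congr_deriv ?_
    simp only [id]
    ring
  have hmono : MonotoneOn (fun y ↦ 1 + p * y - exp y * (1 - (1 - p) * y)) (Set.Ici 0) := by
    refine monotoneOn_of_hasDerivWithinAt_nonneg (convex_Ici 0)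
      (fun x _ ↦ (hderiv x).continuousAt.continuousWithinAt)
      (fun x _ ↦ (hderiv x).hasDerivWithinAt) fun x hx ↦ ?_
    rw [interior_Ici, Set.mem_Ioi] at hx
    have hle : p - (1 - p) * x ≤ p * exp (-x) := by
      nlinarith [mul_le_mul_of_nonneg_left (add_one_le_exp (-x)) hp0]
    have hmul := mul_le_mul_of_nonneg_left hle (exp_pos x).le
    have hone : exp x * exp (-x) = 1 := by rw [← exp_add, add_neg_cancel, exp_zero]
    linear_combination hmul + p * hone
  have h := hmono (Set.mem_Ici.2 le_rfl) (Set.mem_Ici.2 ht) ht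
  simp only [mul_zero, exp_zero] at h
  linarith

open Real in
/-- For `p ≤ 1/2`, the Bernoulli moment generating function at `-t ≤ 0` is bounded by that of a
Gaussian with the same mean and variance. -/
lemma bernoulli_mgf_neg_le {p t : ℝ} (hp0 : 0 ≤ p) (hp1 : p ≤ 1 / 2) (ht : 0 ≤ t) :
    p * exp (-t) + (1 - p) ≤ exp (-(p * t) + p * (1 - p) * t ^ 2 / 2) := by
  have hpos (x : ℝ) : 0 < p * exp (-x) + (1 - p) := by
    have := mul_nonneg hp0 (exp_pos (-x)).le
    linarith
  have hderiv (x : ℝ) : HasDerivAt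
      (fun y ↦ -(p * y) + p * (1 - p) * y ^ 2 / 2 - log (p * exp (-y) + (1 - p)))
      (-p + p * (1 - p) * x + p * exp (-x) / (p * exp (-x) + (1 - p))) x := by
    have hlin := ((hasDerivAt_id x).const_mul p).neg
    have hsq := (((hasDerivAt_id x).pow 2).const_mul (p * (1 - p))).div_const 2
    have hlog := ((((hasDerivAt_id x).neg.exp).const_mul p).add_const (1 - p)).log (hpos x).ne'
    refine ((hlin.add hsq).sub hlog).congr_deriv ?_
    simp [neg_div]
    ring
  have hmono : MonotoneOn
      (fun y ↦ -(p * y) + p * (1 - p) * y ^ 2 / 2 - log (p * exp (-y) + (1 - p)))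
      (Set.Ici 0) := by
    refine monotoneOn_of_hasDerivWithinAt_nonneg (convex_Ici 0)
      (fun x _ ↦ (hderiv x).continuousAt.continuousWithinAt)
      (fun x _ ↦ (hderiv x).hasDerivWithinAt) fun x hx ↦ ?_
    rw [interior_Ici, Set.mem_Ioi] at hx
    have hone : exp x * exp (-x) = 1 := by rw [← exp_add, add_neg_cancel, exp_zero]
    have hle : 1 - (1 - p) * x ≤ exp (-x) * (1 + p * x) := by
      have := mul_le_mul_of_nonneg_left (exp_mul_one_sub_le hp0 hp1 hx.le) (exp_pos (-x)).le
      linear_combination this - (1 - (1 - p) * x) * hone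
    have hdiv : p * (1 - (1 - p) * x) ≤ p * exp (-x) / (p * exp (-x) + (1 - p)) := by
      rw [le_div_iff₀ (hpos x)]
      have hpq : 0 ≤ p * (1 - p) := mul_nonneg hp0 (by linarith)
      linear_combination mul_le_mul_of_nonneg_left hle hpq
    linarith
  have h := hmono (Set.mem_Ici.2 le_rfl) (Set.mem_Ici.2 ht) ht
  rw [← log_le_iff_le_exp (hpos t)]
  simp at h
  linarith

/-- For `X ~ Bi(n,p)` with `p ≤ 1/2`, `q = 1 - p`, and every `a ≥ 0`:
`P(X ≤ EX - a) ≤ exp(-a²/(2npq))`. -/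
theorem binomial_lower_tail_variance (n : ℕ) (hn : 1 ≤ n) (p : ℝ)
    (hp0 : 0 < p) (hp1 : p ≤ 1 / 2) (a : ℝ) (ha0 : 0 ≤ a) :
    (∑ k ∈ Finset.range (n + 1),
        if (k : ℝ) ≤ (n : ℝ) * p - a then
          (n.choose k : ℝ) * p ^ k * (1 - p) ^ (n - k) else 0)
      ≤ Real.exp (-(a ^ 2 / (2 * ((n : ℝ) * p * (1 - p))))) := by
  have hq : 0 < 1 - p := by linarith
  have hn' : (0 : ℝ) < n := by exact_mod_cast hn
  obtain ⟨t, ht⟩ : ∃ t, t = a / (n * p * (1 - p)) := ⟨_, rfl⟩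
  have ht0 : 0 ≤ t := by rw [ht]; positivity
  calc _ ≤ ∑ k ∈ Finset.range (n + 1), Real.exp (t * (n * p - a)) *
        ((p * Real.exp (-t)) ^ k * (1 - p) ^ (n - k) * n.choose k) := by
        refine Finset.sum_le_sum fun k _ ↦ ?_
        split_ifs with hk
        · have hexp : 1 ≤ Real.exp (t * (n * p - a)) * Real.exp (-t) ^ k := by
            rw [← Real.exp_nat_mul, ← Real.exp_add, Real.one_le_exp_iff]
            linear_combination mul_le_mul_of_nonneg_left hk ht0
          have hterm : 0 ≤ (n.choose k : ℝ) * p ^ k * (1 - p) ^ (n - k) := by positivity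
          rw [mul_pow]
          linear_combination mul_le_mul_of_nonneg_left hexp hterm
        · positivity
    _ = Real.exp (t * (n * p - a)) * (p * Real.exp (-t) + (1 - p)) ^ n := by
        rw [← Finset.mul_sum, add_pow]
    _ ≤ Real.exp (t * (n * p - a)) *
          Real.exp (-(p * t) + p * (1 - p) * t ^ 2 / 2) ^ n := by
        gcongr
        exact bernoulli_mgf_neg_le hp0.le hp1 ht0
    _ = Real.exp (-(a ^ 2 / (2 * ((n : ℝ) * p * (1 - p))))) := by
        rw [← Real.exp_nat_mul, ← Real.exp_add, ht]
        congr 1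
        field_simp
        ring
end

section
/- For every α > 0, every c with 0 < c < 1/e, and every A < ∞, there exist a positive integer n and indicator random variables I_1, ..., I_n on some probability space which are negatively related, such that the random variable X = I_1 + ... + I_n satisfies σ² := Var X > A and P( X > E X + a ) > c·e^{−a/σ}, where a = α·σ and σ = √(Var X). -/
open MeasureTheory ProbabilityTheory

/-- Indicator variables `(Iᵢ)` on a probability space `(Ω, μ)` are *negatively related*
if for each `j` with `P(I_j = 1) > 0` there is an extension `(Ω', μ', π)` of the
probability space carrying random variables `(J_{ij})ᵢ` whose joint distribution equals
the conditional joint distribution of `(Iᵢ)ᵢ` given `I_j = 1`, and such that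
`J_{ij} ≤ Iᵢ` almost surely for every `i ≠ j`. -/
def NegativelyRelated {Ω : Type*} [MeasurableSpace Ω] (μ : Measure Ω)
    {n : ℕ} (I : Fin n → Ω → ℝ) : Prop :=
  ∀ j : Fin n, μ {ω | I j ω = 1} ≠ 0 →
    ∃ (Ω' : Type) (_ : MeasurableSpace Ω') (μ' : Measure Ω')
      (_ : IsProbabilityMeasure μ') (π : Ω' → Ω) (J : Fin n → Ω' → ℝ),
      Measurable π ∧ Measure.map π μ' = μ ∧ (∀ i, Measurable (J i)) ∧
      Measure.map (fun ω' i => J i ω') μ' =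
        Measure.map (fun ω i => I i ω) (μ[|{ω | I j ω = 1}]) ∧
      ∀ i, i ≠ j → ∀ᵐ ω' ∂μ', J i ω' ≤ I i (π ω')

/-- The measure on a finite type giving mass `w a` to each point `a`. -/
noncomputable def weightedMeasure {Ω : Type*} [Fintype Ω] [MeasurableSpace Ω] (w : Ω → ℝ) :
    Measure Ω :=
  ∑ a, ENNReal.ofReal (w a) • Measure.dirac a

section WeightedMeasure

variable {Ω : Type*} [Fintype Ω] [MeasurableSpace Ω] [DiscreteMeasurableSpace Ω] {w : Ω → ℝ}

instance : IsFiniteMeasure (weightedMeasure w) := by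
  refine ⟨?_⟩
  simp [weightedMeasure, Measure.finsetSum_apply, ENNReal.sum_lt_top]

open Classical in
lemma weightedMeasure_real (hw : ∀ a, 0 ≤ w a) (s : Set Ω) :
    (weightedMeasure w).real s = ∑ a, if a ∈ s then w a else 0 := by
  rw [measureReal_def, weightedMeasure, Measure.finsetSum_apply, ENNReal.toReal_sum]
  · refine Finset.sum_congr rfl fun a _ => ?_
    by_cases h : a ∈ s <;> simp [h, hw a]
  · intro a _
    by_cases h : a ∈ s <;> simp [h]

lemma weightedMeasure_real_singleton (hw : ∀ a, 0 ≤ w a) (a : Ω) :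
    (weightedMeasure w).real {a} = w a := by
  classical
  simp [weightedMeasure_real hw]

lemma isProbabilityMeasure_weightedMeasure (hw : ∀ a, 0 ≤ w a) (h1 : ∑ a, w a = 1) :
    IsProbabilityMeasure (weightedMeasure w) := by
  classical
  refine ⟨?_⟩
  have h := weightedMeasure_real hw Set.univ
  simp only [Set.mem_univ, if_true, h1, measureReal_def] at h
  rwa [ENNReal.toReal_eq_one_iff] at h

lemma integral_weightedMeasure (hw : ∀ a, 0 ≤ w a) (f : Ω → ℝ) :
    ∫ a, f a ∂(weightedMeasure w) = ∑ a, w a * f a := by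
  rw [weightedMeasure, integral_finsetSum_measure]
  · simp [integral_smul_measure, hw]
  · intro a _
    exact (Integrable.of_finite (μ := Measure.dirac a)).smul_measure (by simp)

lemma variance_weightedMeasure (hw : ∀ a, 0 ≤ w a) (f : Ω → ℝ) :
    variance f (weightedMeasure w) = ∑ a, w a * (f a - ∑ b, w b * f b) ^ 2 := by
  rw [variance_eq_integral Measurable.of_discrete.aemeasurable, integral_weightedMeasure hw,
    integral_weightedMeasure hw]

lemma ae_weightedMeasure {P : Ω → Prop} (hw : ∀ a, 0 ≤ w a) (h : ∀ a, w a ≠ 0 → P a) :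
    ∀ᵐ a ∂(weightedMeasure w), P a := by
  classical
  rw [ae_iff, ← measureReal_eq_zero_iff, weightedMeasure_real hw]
  refine Finset.sum_eq_zero fun a _ => ?_
  by_cases ha : w a = 0
  · simp [ha]
  · simp [h a ha]

lemma map_weightedMeasure {Ω' : Type*} [Fintype Ω'] [DecidableEq Ω'] [MeasurableSpace Ω']
    [DiscreteMeasurableSpace Ω'] (hw : ∀ a, 0 ≤ w a) (f : Ω → Ω') :
    Measure.map f (weightedMeasure w) =
      weightedMeasure fun b => ∑ a, if f a = b then w a else 0 := by
  classical
  rw [ext_iff_measureReal_singleton]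
  intro b
  rw [map_measureReal_apply Measurable.of_discrete (measurableSet_singleton b),
    weightedMeasure_real hw, weightedMeasure_real_singleton]
  · simp
  · intro b
    exact Finset.sum_nonneg fun a _ => by split_ifs <;> simp [hw]

open Classical in
lemma cond_weightedMeasure (hw : ∀ a, 0 ≤ w a) (s : Set Ω) :
    (weightedMeasure w)[|s] =
      weightedMeasure fun a => if a ∈ s then w a / (weightedMeasure w).real s else 0 := by
  by_cases hs : weightedMeasure w s = 0
  · rw [cond_eq_zero_of_meas_eq_zero hs, measureReal_def, hs]
    simp [weightedMeasure]
  have := cond_isProbabilityMeasure hs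
  rw [ext_iff_measureReal_singleton]
  intro a
  rw [weightedMeasure_real_singleton]
  · rw [measureReal_def, cond_apply MeasurableSet.of_discrete]
    by_cases ha : a ∈ s
    · rw [Set.inter_eq_right.mpr (by simpa using ha), ENNReal.toReal_mul, if_pos ha,
        ← measureReal_def, weightedMeasure_real_singleton hw, ENNReal.toReal_inv, measureReal_def]
      ring
    · rw [Set.inter_singleton_eq_empty.mpr ha]
      simp [ha]
  · intro a
    split_ifs
    · exact div_nonneg (hw a) measureReal_nonneg
    · exact le_rfl

end WeightedMeasure

/-- A coupling `g` of the law `w` of a random set with its conditional law given that `j` is a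
member, in which the conditioned set is contained in the original one up to `j`. -/
structure IsNegativeCoupling {ι : Type*} [Fintype ι] [DecidableEq ι] (w : Finset ι → ℝ) (j : ι)
    (g : Finset ι → Finset ι → ℝ) : Prop where
  nonneg : ∀ S R, 0 ≤ g S R
  sum_right : ∀ S, ∑ R, g S R = w S
  sum_left : ∀ R, ∑ S, g S R = if j ∈ R then w R / (∑ S, if j ∈ S then w S else 0) else 0
  subset : ∀ S R, g S R ≠ 0 → R ⊆ insert j S

lemma negativelyRelated_of_coupling {n : ℕ} [MeasurableSpace (Finset (Fin n))]
    [DiscreteMeasurableSpace (Finset (Fin n))] {w : Finset (Fin n) → ℝ} (hw : ∀ S, 0 ≤ w S)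
    (h1 : ∑ S, w S = 1) (hg : ∀ j, ∃ g, IsNegativeCoupling w j g) :
    NegativelyRelated (weightedMeasure w) fun i S => if i ∈ S then (1 : ℝ) else 0 := by
  classical
  intro j _
  obtain ⟨g, hg⟩ := hg j
  have hg0 : ∀ q : Finset (Fin n) × Finset (Fin n), 0 ≤ g q.1 q.2 := fun q => hg.nonneg _ _
  have hset : {S : Finset (Fin n) | (if j ∈ S then (1 : ℝ) else 0) = 1} = {S | j ∈ S} := by
    ext S; by_cases h : j ∈ S <;> simp [h]
  refine ⟨Finset (Fin n) × Finset (Fin n), inferInstance, weightedMeasure fun q => g q.1 q.2,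
    isProbabilityMeasure_weightedMeasure hg0 ?_, Prod.fst,
    fun i q => if i ∈ q.2 then 1 else 0, Measurable.of_discrete, ?_,
    fun i => Measurable.of_discrete, ?_, ?_⟩
  · rw [Fintype.sum_prod_type, ← h1]
    exact Finset.sum_congr rfl fun S _ => hg.sum_right S
  · rw [map_weightedMeasure hg0]
    congr 1
    ext S
    rw [Fintype.sum_prod_type, ← hg.sum_right S, Finset.sum_eq_single S] <;> simp +contextual
  · rw [hset, cond_weightedMeasure hw]
    have hcomp : (fun (q : Finset (Fin n) × Finset (Fin n)) (i : Fin n) =>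
        if i ∈ q.2 then (1 : ℝ) else 0) =
        (fun (S : Finset (Fin n)) (i : Fin n) => if i ∈ S then (1 : ℝ) else 0) ∘ Prod.snd := rfl
    rw [hcomp, ← Measure.map_map Measurable.of_discrete Measurable.of_discrete,
      map_weightedMeasure hg0]
    congr 2
    ext R
    rw [Fintype.sum_prod_type_right, Finset.sum_eq_single R]
    · simp only [weightedMeasure_real hw, Set.mem_ofPred_eq, if_true]
      convert hg.sum_left R
    · simp +contextual
    · simp
  · intro i hij
    refine ae_weightedMeasure hg0 fun q hq => ?_
    have := hg.subset _ _ hq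
    by_cases hi : i ∈ q.2
    · have : i ∈ q.1 := by simpa [hij] using this hi
      simp [this, hi]
    · simp only [hi, if_false]
      split_ifs <;> simp

section Exchangeable

variable {ι : Type*} [DecidableEq ι]

/-- The probability that, given the random set `S`, the element `x ≠ j` of `S` is deleted,
or that nothing is deleted in case `x = j`. -/
noncomputable def deletionProb (d : ℕ → ℝ) (j : ι) (S : Finset ι) (x : ι) : ℝ :=
  if x = j then 1 - (S.erase j).card * d (S.erase j).card
  else if x ∈ S then d (S.erase j).card else 0

lemma deletionProb_insert {d : ℕ → ℝ} {j : ι} {T : Finset ι} (x : ι) :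
    deletionProb d j (insert j T) x = deletionProb d j T x := by
  unfold deletionProb
  by_cases hx : x = j <;> simp [hx]

variable [Fintype ι]

lemma sum_finset_eq_sum_powerset_erase {M : Type*} [AddCommMonoid M] (j : ι)
    (F : Finset ι → M) :
    ∑ S, F S = ∑ T ∈ (Finset.univ.erase j).powerset, (F T + F (insert j T)) := by
  rw [Finset.sum_add_distrib, ← Finset.sum_powerset_insert (by simp),
    Finset.insert_erase (Finset.mem_univ j), Finset.powerset_univ]

lemma sum_deletionProb (d : ℕ → ℝ) (j : ι) (S : Finset ι) :
    ∑ x, deletionProb d j S x = 1 := by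
  rw [← Finset.add_sum_erase _ _ (Finset.mem_univ j)]
  have h : ∑ x ∈ Finset.univ.erase j, deletionProb d j S x =
      ∑ x ∈ Finset.univ.erase j, if x ∈ S.erase j then d (S.erase j).card else 0 := by
    refine Finset.sum_congr rfl fun x hx => ?_
    have hx : x ≠ j := by simpa using hx
    simp [deletionProb, hx]
  rw [h, ← Finset.sum_filter]
  have h2 : (Finset.univ.erase j).filter (fun x => x ∈ S.erase j) = S.erase j := by
    ext x; simp +contextual
  rw [h2]
  simp [deletionProb]

lemma sum_deletionProb_preimage {u d : ℕ → ℝ} {j : ι} {Q : Finset ι} (hQ : j ∉ Q) (x : ι) :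
    (∑ S : Finset ι, if insert j (S.erase x) = insert j Q then u S.card * deletionProb d j S x
      else 0) =
    if x = j then (u Q.card + u (Q.card + 1)) * (1 - Q.card * d Q.card)
    else if x ∈ Q then 0 else (u (Q.card + 1) + u (Q.card + 2)) * d (Q.card + 1) := by
  rw [sum_finset_eq_sum_powerset_erase j]
  have hins : ∀ {B C : Finset ι}, j ∉ B → j ∉ C → (insert j B = insert j C ↔ B = C) := by
    intro B C hB hC
    constructor
    · intro h
      rw [← Finset.erase_insert hB, h, Finset.erase_insert hC]
    · rintro rfl; rfl
  have key : ∀ T ∈ (Finset.univ.erase j).powerset,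
      ((if insert j (T.erase x) = insert j Q then u T.card * deletionProb d j T x else 0) +
        if insert j ((insert j T).erase x) = insert j Q then
          u (insert j T).card * deletionProb d j (insert j T) x else 0) =
      if T.erase x = Q then (u T.card + u (T.card + 1)) * deletionProb d j T x else 0 := by
    intro T hT
    have hj : j ∉ T := fun h => by simpa using Finset.mem_powerset.mp hT h
    have e1 : insert j ((insert j T).erase x) = insert j (T.erase x) := by
      ext y; simp only [Finset.mem_insert, Finset.mem_erase]; tauto
    have e2 := hins (B := T.erase x) (by simp [hj]) hQ
    simp only [e1, e2, deletionProb_insert, Finset.card_insert_of_notMem hj]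
    split_ifs <;> ring
  rw [Finset.sum_congr rfl key]
  have hmem : ∀ {T : Finset ι}, T ∈ (Finset.univ.erase j).powerset ↔ j ∉ T := by
    intro T
    simp only [Finset.mem_powerset, Finset.subset_iff, Finset.mem_erase, Finset.mem_univ, and_true]
    exact ⟨fun h hj => h hj rfl, fun h y hy hyj => h (hyj ▸ hy)⟩
  by_cases hx : x = j
  · subst hx
    rw [Finset.sum_eq_single Q]
    · simp [hQ, deletionProb]
    · intro T hT hTQ
      rw [Finset.erase_eq_of_notMem (hmem.mp hT), if_neg hTQ]
    · intro h
      exact absurd (hmem.mpr hQ) h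
  simp only [hx, if_false]
  by_cases hxQ : x ∈ Q
  · rw [if_pos hxQ]
    refine Finset.sum_eq_zero fun T _ => if_neg ?_
    rintro rfl
    simp at hxQ
  · rw [if_neg hxQ, Finset.sum_eq_single (insert x Q)]
    · have hj : j ∉ insert x Q := by simp [hQ, Ne.symm hx]
      simp [Finset.erase_insert hxQ, deletionProb, hx, Finset.card_insert_of_notMem hxQ,
        Finset.erase_eq_of_notMem hj]
    · intro T hT hTQ
      by_cases hxT : x ∈ T
      · refine if_neg ?_
        rintro rfl
        exact hTQ (Finset.insert_erase hxT).symm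
      · simp [deletionProb, hx, hxT]
    · intro h
      exact absurd (hmem.mpr (by simp [hQ, Ne.symm hx])) h

/-- An exchangeable random set admits a negative coupling as soon as its conditional law given
one member can be reached from its law by deleting at most one random element. -/
lemma exists_isNegativeCoupling {N : ℕ} (hN : Fintype.card ι = N + 1) {u d : ℕ → ℝ} {p : ℝ}
    (j : ι) (hu : ∀ k, 0 ≤ u k) (hd : ∀ k, 0 ≤ d k) (hd1 : ∀ k, k * d k ≤ 1)
    (hp : (∑ S : Finset ι, if j ∈ S then u S.card else 0) = p)
    (hbal : ∀ r ≤ N, (u r + u (r + 1)) * (1 - r * d r) +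
      ((N : ℝ) - r) * ((u (r + 1) + u (r + 2)) * d (r + 1)) = u (r + 1) / p) :
    ∃ g, IsNegativeCoupling (fun S : Finset ι => u S.card) j g := by
  refine ⟨fun S R => ∑ x, if insert j (S.erase x) = R then u S.card * deletionProb d j S x
    else 0, ?_, ?_, ?_, ?_⟩
  · intro S R
    refine Finset.sum_nonneg fun x _ => ?_
    split_ifs
    · refine mul_nonneg (hu _) ?_
      unfold deletionProb
      split_ifs
      · linarith [hd1 (S.erase j).card]
      · exact hd _
      · exact le_rfl
    · exact le_rfl
  · intro S
    rw [Finset.sum_comm]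
    simp [← Finset.mul_sum, sum_deletionProb]
  · intro R
    rw [hp, Finset.sum_comm]
    by_cases hj : j ∈ R
    · obtain ⟨Q, hQ, rfl⟩ : ∃ Q, j ∉ Q ∧ R = insert j Q :=
        ⟨R.erase j, by simp, (Finset.insert_erase hj).symm⟩
      have hcard : (insert j Q).card = Q.card + 1 := Finset.card_insert_of_notMem hQ
      have hle : Q.card ≤ N := by
        have := Finset.card_le_univ (insert j Q)
        omega
      simp only [sum_deletionProb_preimage hQ]
      rw [if_pos hj, hcard, ← hbal _ hle, ← Finset.add_sum_erase _ _ (Finset.mem_univ j),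
        if_pos rfl]
      congr 1
      have h : ∀ x ∈ Finset.univ.erase j,
          (if x = j then (u Q.card + u (Q.card + 1)) * (1 - Q.card * d Q.card)
            else if x ∈ Q then 0 else (u (Q.card + 1) + u (Q.card + 2)) * d (Q.card + 1)) =
          if x ∉ Q then (u (Q.card + 1) + u (Q.card + 2)) * d (Q.card + 1) else 0 := by
        intro x hx
        have hx : x ≠ j := by simpa using hx
        by_cases hxQ : x ∈ Q <;> simp [hx, hxQ]
      rw [Finset.sum_congr rfl h, ← Finset.sum_filter]
      have h2 : (Finset.univ.erase j).filter (fun x => x ∉ Q) = (insert j Q)ᶜ := by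
        ext x; simp
      rw [h2, Finset.sum_const, Finset.card_compl, hcard, hN, nsmul_eq_mul,
        Nat.add_sub_add_right, Nat.cast_sub hle]
    · rw [if_neg hj]
      refine Finset.sum_eq_zero fun x _ => Finset.sum_eq_zero fun S _ => if_neg ?_
      rintro rfl
      simp at hj
  · intro S R h
    obtain ⟨x, _, hx⟩ := Finset.exists_ne_zero_of_sum_ne_zero h
    have : insert j (S.erase x) = R := by
      by_contra h'
      simp [h'] at hx
    rw [← this]
    exact Finset.insert_subset_insert _ (Finset.erase_subset _ _)

end Exchangeable

section SizeLaw

variable {N : ℕ} {x : ℕ → ℝ}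

lemma sum_finset_sizeLaw (x h : ℕ → ℝ) (n : ℕ) :
    ∑ S : Finset (Fin n), x S.card / n.choose S.card * h S.card =
      ∑ k ∈ Finset.range (n + 1), x k * h k := by
  rw [← Finset.powerset_univ,
    Finset.sum_powerset_apply_card (fun k => x k / n.choose k * h k), Finset.card_univ,
    Fintype.card_fin]
  refine Finset.sum_congr rfl fun k hk => ?_
  have hk : k ≤ n := by simpa [Nat.lt_succ_iff] using hk
  have : (n.choose k : ℝ) ≠ 0 := by exact_mod_cast (Nat.choose_pos hk).ne'
  rw [nsmul_eq_mul]
  field_simp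

lemma choose_succ_succ_cast (N r : ℕ) :
    ((N + 1).choose (r + 1) : ℝ) * (r + 1) = (N + 1) * N.choose r := by
  exact_mod_cast (Nat.add_one_mul_choose_eq N r).symm

lemma sum_sizeLaw_mem (x : ℕ → ℝ) (N : ℕ) (j : Fin (N + 1)) :
    (∑ S : Finset (Fin (N + 1)), if j ∈ S then x S.card / (N + 1).choose S.card else 0) =
      (∑ k ∈ Finset.range (N + 2), x k * k) / (N + 1) := by
  rw [sum_finset_eq_sum_powerset_erase j]
  have key : ∀ T ∈ (Finset.univ.erase j).powerset,
      ((if j ∈ T then x T.card / (N + 1).choose T.card else 0) +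
        if j ∈ insert j T then x (insert j T).card / (N + 1).choose (insert j T).card else 0) =
      x (T.card + 1) / (N + 1).choose (T.card + 1) := by
    intro T hT
    have hj : j ∉ T := fun h => by simpa using Finset.mem_powerset.mp hT h
    simp [hj]
  rw [Finset.sum_congr rfl key,
    Finset.sum_powerset_apply_card (fun k => x (k + 1) / (N + 1).choose (k + 1)),
    Finset.sum_range_succ' _ (N + 1), Finset.card_erase_of_mem (Finset.mem_univ j),
    Finset.card_univ, Fintype.card_fin, Nat.add_sub_cancel, Nat.cast_zero, mul_zero, add_zero,
    Finset.sum_div]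
  refine Finset.sum_congr rfl fun k hk => ?_
  have hk : k ≤ N := by simpa [Nat.lt_succ_iff] using hk
  have h1 : ((N + 1).choose (k + 1) : ℝ) ≠ 0 := by
    exact_mod_cast (Nat.choose_pos (by omega)).ne'
  have h2 : ((N : ℝ) + 1) ≠ 0 := by positivity
  have h3 := choose_succ_succ_cast N k
  rw [nsmul_eq_mul]
  push_cast
  field_simp
  linear_combination (-x (k + 1)) * h3

/-- The probability that a uniformly random subset of an `(N + 1)`-element set, with size law `x`,
has exactly `r` elements besides a fixed one. -/
noncomputable def otherSizeLaw (N : ℕ) (x : ℕ → ℝ) (r : ℕ) : ℝ :=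
  x r * (1 - r / (N + 1)) + x (r + 1) * ((r + 1) / (N + 1))

lemma sizeLaw_add_succ {r : ℕ} (hr : r ≤ N) :
    x r / (N + 1).choose r + x (r + 1) / (N + 1).choose (r + 1) =
      otherSizeLaw N x r / N.choose r := by
  have h0 : (N.choose r : ℝ) ≠ 0 := by exact_mod_cast (Nat.choose_pos hr).ne'
  have h1 : ((N + 1).choose (r + 1) : ℝ) ≠ 0 := by
    exact_mod_cast (Nat.choose_pos (by omega)).ne'
  have h1' : ((N + 1).choose r : ℝ) ≠ 0 := by
    exact_mod_cast (Nat.choose_pos (by omega)).ne'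
  have h2 : ((N : ℝ) + 1) ≠ 0 := by positivity
  have h3 := choose_succ_succ_cast N r
  have h4 : ((N + 1).choose r : ℝ) * (N + 1 - r) = (N + 1) * N.choose r := by
    have h := Nat.choose_succ_right_eq (N + 1) r
    have h' : ((N + 1).choose (r + 1) : ℝ) * (r + 1) =
        (N + 1).choose r * ((N + 1 - r : ℕ) : ℝ) := by exact_mod_cast h
    rw [Nat.cast_sub (by omega)] at h'
    push_cast at h'
    rw [← h', h3]
  have e1 : 1 - (r : ℝ) / (N + 1) = N.choose r / (N + 1).choose r := by
    field_simp
    linear_combination h4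
  have e2 : ((r : ℝ) + 1) / (N + 1) = N.choose r / (N + 1).choose (r + 1) := by
    field_simp
    linear_combination h3
  rw [otherSizeLaw, e1, e2]
  field_simp

/-- A uniformly random set with size law `x` admits negative couplings if the excess `e` of the
tails of the size-biased law over those of `x` is dominated by the atoms of `x`. -/
lemma exists_isNegativeCoupling_sizeLaw {e : ℕ → ℝ} {M : ℝ} (hx : ∀ k, 0 ≤ x k)
    (hx0 : x 0 = 0) (hxN : ∀ k, N < k → x k = 0)
    (hM : ∑ k ∈ Finset.range (N + 2), x k * k = M) (hM0 : 0 < M)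
    (he : ∀ k, 0 ≤ e k) (hex : ∀ k, e k ≤ x k * (1 - k / (N + 1)))
    (hrec : ∀ k, e k = e (k + 1) + x (k + 1) * ((k + 1) / M - 1)) (j : Fin (N + 1)) :
    ∃ g, IsNegativeCoupling
      (fun S : Finset (Fin (N + 1)) => x S.card / (N + 1).choose S.card) j g := by
  set f : ℕ → ℝ := fun k => x k * (1 - k / (N + 1)) - e k with hf
  set a : ℕ → ℝ := otherSizeLaw N x with ha
  have hf0 : ∀ k, 0 ≤ f k := fun k => sub_nonneg.mpr (hex k)
  have hfa : ∀ k, f k ≤ a k := by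
    intro k
    have : 0 ≤ x (k + 1) * (((k : ℝ) + 1) / (N + 1)) := mul_nonneg (hx _) (by positivity)
    simp only [hf, ha, otherSizeLaw]
    linarith [he k]
  have ha0 : ∀ k, 0 ≤ a k := fun k => (hf0 k).trans (hfa k)
  have hfz : ∀ k, x k = 0 → f k = 0 := by
    intro k hk
    have h := hf0 k
    simp only [hf, hk, zero_mul] at h ⊢
    linarith [he k]
  have had : ∀ k, a k * (k * (f k / (k * a k))) = f k := by
    intro k
    rcases Nat.eq_zero_or_pos k with rfl | hk
    · simp [hfz 0 hx0]
    · have hk : (k : ℝ) ≠ 0 := by exact_mod_cast hk.ne'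
      by_cases hak : a k = 0
      · have : f k = 0 := le_antisymm (hak ▸ hfa k) (hf0 k)
        simp [this]
      · field_simp
  have hn : ((N : ℝ) + 1) ≠ 0 := by positivity
  refine exists_isNegativeCoupling (N := N) (p := M / (N + 1)) (by simp)
    (u := fun k => x k / (N + 1).choose k)
    (d := fun k => f k / (k * a k)) j (fun k => div_nonneg (hx k) (by positivity))
    (fun k => div_nonneg (hf0 k) (mul_nonneg (by positivity) (ha0 k))) ?_
    (by rw [sum_sizeLaw_mem, hM]) ?_
  · intro k
    rcases Nat.eq_zero_or_pos k with rfl | hk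
    · simp
    · have hk : (k : ℝ) ≠ 0 := by exact_mod_cast hk.ne'
      rw [mul_div_assoc', mul_div_mul_left _ _ hk]
      exact div_le_one_of_le₀ (hfa k) (ha0 k)
  · intro r hr
    have hC : (N.choose r : ℝ) ≠ 0 := by exact_mod_cast (Nat.choose_pos hr).ne'
    have hC1 : ((N + 1).choose (r + 1) : ℝ) ≠ 0 := by
      exact_mod_cast (Nat.choose_pos (by omega)).ne'
    have e1 : (x r / (N + 1).choose r + x (r + 1) / (N + 1).choose (r + 1)) *
        (1 - r * (f r / (r * a r))) = (a r - f r) / N.choose r := by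
      have h6 := had r
      rw [sizeLaw_add_succ hr, ← ha]
      generalize r * (f r / (r * a r)) = D at h6 ⊢
      rw [← h6]
      ring
    have e2 : ((N : ℝ) - r) * ((x (r + 1) / (N + 1).choose (r + 1) +
        x (r + 2) / (N + 1).choose (r + 2)) * (f (r + 1) / ((r + 1 : ℕ) * a (r + 1)))) =
        f (r + 1) / N.choose r := by
      rcases hr.eq_or_lt with rfl | hlt
      · simp [hfz _ (hxN _ (Nat.lt_succ_self _))]
      · have h5 : (N.choose (r + 1) : ℝ) * (r + 1) = N.choose r * (N - r) := by
          have h := Nat.choose_succ_right_eq N r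
          have h' : (N.choose (r + 1) : ℝ) * (r + 1) = N.choose r * ((N - r : ℕ) : ℝ) := by
            exact_mod_cast h
          rwa [Nat.cast_sub hr] at h'
        have hC2 : (N.choose (r + 1) : ℝ) ≠ 0 := by
          exact_mod_cast (Nat.choose_pos (by omega)).ne'
        have h6 := had (r + 1)
        rw [sizeLaw_add_succ (by omega : r + 1 ≤ N), ← ha]
        rw [div_mul_eq_mul_div, mul_div_assoc', div_eq_div_iff hC2 hC]
        push_cast at h6 ⊢
        generalize f (r + 1) / (((r : ℝ) + 1) * a (r + 1)) = D at h6 ⊢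
        rw [← h6]
        linear_combination (-(a (r + 1) * D)) * h5
    have e3 : x (r + 1) / (N + 1).choose (r + 1) / (M / (N + 1)) =
        x (r + 1) * ((r + 1) / M) / N.choose r := by
      have h3 := choose_succ_succ_cast N r
      field_simp
      linear_combination (-x (r + 1)) * h3
    rw [e1, e2, e3, ← add_div]
    congr 1
    simp only [hf, ha, otherSizeLaw]
    push_cast
    linear_combination hrec r

end SizeLaw

/-- A size law which is bounded below on an interval of sizes admits negative couplings when these
sizes are large and the ground set is larger still. -/
lemma exists_isNegativeCoupling_of_interval {N m K : ℕ} {x : ℕ → ℝ} {δ : ℝ}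
    (hx : ∀ k, 0 ≤ x k) (hx0 : ∀ k, k < m ∨ m + K < k → x k = 0)
    (hxδ : ∀ k, m ≤ k → k ≤ m + K → δ ≤ x k) (hm : 0 < m) (hKm : (K : ℝ) / m ≤ δ / 2)
    (hN : 2 * (m + K) ≤ N) (h1 : ∑ k ∈ Finset.range (N + 2), x k = 1) (j : Fin (N + 1)) :
    ∃ g, IsNegativeCoupling
      (fun S : Finset (Fin (N + 1)) => x S.card / (N + 1).choose S.card) j g := by
  set M := ∑ k ∈ Finset.range (N + 2), x k * k with hM
  have hm' : (0 : ℝ) < m := by exact_mod_cast hm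
  have hmM : (m : ℝ) ≤ M := by
    rw [← one_mul (m : ℝ), ← h1, Finset.sum_mul]
    refine Finset.sum_le_sum fun k _ => ?_
    rcases lt_or_ge k m with h | h
    · simp [hx0 k (Or.inl h)]
    · exact mul_le_mul_of_nonneg_left (by exact_mod_cast h) (hx k)
  have hM0 : 0 < M := hm'.trans_le hmM
  have htot : ∑ l ∈ Finset.range (N + 2), x l * (l / M - 1) = 0 := by
    simp only [mul_sub, mul_one, Finset.sum_sub_distrib, h1, ← mul_div_assoc, ← Finset.sum_div,
      ← hM, div_self hM0.ne', sub_self]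
  refine exists_isNegativeCoupling_sizeLaw (M := M) hx (hx0 0 (Or.inl hm))
    (fun k hk => hx0 k (Or.inr (by omega))) hM.symm hM0
    (e := fun k => ∑ l ∈ Finset.range (N + 2), if k < l then x l * (l / M - 1) else 0)
    ?_ ?_ ?_ j
  · intro k
    rcases le_total M k with h | h
    · refine Finset.sum_nonneg fun l _ => ?_
      split_ifs with hl
      · have hl : (k : ℝ) ≤ l := by exact_mod_cast hl.le
        exact mul_nonneg (hx l) (sub_nonneg.mpr ((one_le_div hM0).mpr (h.trans hl)))
      · exact le_rfl
    · refine htot.symm.le.trans (Finset.sum_le_sum fun l _ => ?_)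
      split_ifs with hl
      · exact le_rfl
      · have hl : (l : ℝ) ≤ k := by exact_mod_cast not_lt.mp hl
        exact mul_nonpos_of_nonneg_of_nonpos (hx l)
          (sub_nonpos.mpr ((div_le_one hM0).mpr (hl.trans h)))
  · intro k
    by_cases hk : k < m ∨ m + K < k
    · rw [hx0 k hk, zero_mul]
      rcases hk with hk | hk
      · refine ((Finset.sum_congr rfl fun l _ => ?_).trans htot).le
        split_ifs with hl
        · rfl
        · rw [hx0 l (Or.inl (by omega)), zero_mul]
      · refine (Finset.sum_eq_zero fun l _ => ?_).le
        split_ifs with hl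
        · rw [hx0 l (Or.inr (by omega)), zero_mul]
        · rfl
    · push Not at hk
      have hδ : 0 ≤ δ := by
        have : (0 : ℝ) ≤ K / m := by positivity
        linarith
      have hhalf : (1 : ℝ) / 2 ≤ 1 - k / (N + 1) := by
        have h : (2 : ℝ) * k ≤ N := by
          exact_mod_cast (by omega : 2 * k ≤ N)
        have : (k : ℝ) / (N + 1) ≤ 1 / 2 := by
          rw [div_le_div_iff₀ (by positivity) (by norm_num)]
          linarith
        linarith
      calc _ ≤ ∑ l ∈ Finset.range (N + 2), x l * ((K : ℝ) / m) := by
            refine Finset.sum_le_sum fun l _ => ?_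
            have hKm0 : (0 : ℝ) ≤ K / m := by positivity
            split_ifs with hl
            · by_cases hlK : m + K < l
              · simp [hx0 l (Or.inr hlK)]
              · refine mul_le_mul_of_nonneg_left ?_ (hx l)
                have h2 : (l : ℝ) ≤ m + K := by exact_mod_cast not_lt.mp hlK
                have h3 : (l : ℝ) / M ≤ (m + K) / m := by gcongr
                rw [add_div, div_self hm'.ne'] at h3
                linarith
            · exact mul_nonneg (hx l) hKm0
        _ = K / m := by rw [← Finset.sum_mul, h1, one_mul]
        _ ≤ δ * (1 / 2) := by linarith
        _ ≤ x k * (1 - k / (N + 1)) :=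
            mul_le_mul (hxδ k hk.1 hk.2) hhalf (by norm_num) (hx k)
  · intro k
    rw [← sub_eq_iff_eq_add', ← Finset.sum_sub_distrib]
    have h : ∀ l ∈ Finset.range (N + 2), ((if k < l then x l * (l / M - 1) else 0) -
        if k + 1 < l then x l * (l / M - 1) else 0) =
        if l = k + 1 then x l * (l / M - 1) else 0 := by
      intro l _
      rcases lt_trichotomy l (k + 1) with hl | hl | hl
      · simp [hl.ne, not_lt.mpr hl.le, not_lt.mpr (Nat.lt_succ_iff.mp hl)]
      · simp [hl]
      · simp [hl.ne', hl, (Nat.lt_succ_self k).trans hl]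
    rw [Finset.sum_congr rfl h, Finset.sum_ite_eq']
    split_ifs with hk
    · push_cast
      rfl
    · rw [hx0 (k + 1) (Or.inr (by simp at hk; omega)), zero_mul]

/-- The law with an atom of mass `p` at `m + K`, an atom of mass `1 - p - δ (K + 1)` at `m`, and
an additional mass `δ` at each integer in between, endpoints included. -/
noncomputable def twoPointLaw (m K : ℕ) (p δ : ℝ) (k : ℕ) : ℝ :=
  (if m ≤ k ∧ k ≤ m + K then δ else 0) + (if k = m + K then p else 0) +
    if k = m then 1 - p - δ * (K + 1) else 0

lemma sum_twoPointLaw {m K L : ℕ} (hL : m + K < L) (p δ : ℝ) (h : ℕ → ℝ) :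
    ∑ k ∈ Finset.range L, twoPointLaw m K p δ k * h k =
      δ * ∑ i ∈ Finset.range (K + 1), h (m + i) + p * h (m + K) +
        (1 - p - δ * (K + 1)) * h m := by
  simp only [twoPointLaw, add_mul, ite_mul, zero_mul, Finset.sum_add_distrib, Finset.sum_ite_eq',
    Finset.mem_range, hL, (Nat.le_add_right m K).trans_lt hL, if_true]
  congr 2
  rw [← Finset.sum_filter, Finset.mul_sum]
  have : (Finset.range L).filter (fun k => m ≤ k ∧ k ≤ m + K) = Finset.Ico m (m + K + 1) := by
    ext k; simp; omega
  rw [this, Finset.sum_Ico_eq_sum_range, show m + K + 1 - m = K + 1 by omega]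

lemma sum_twoPointLaw_eq_one {m K L : ℕ} (hL : m + K < L) (p δ : ℝ) :
    ∑ k ∈ Finset.range L, twoPointLaw m K p δ k = 1 := by
  have := sum_twoPointLaw hL p δ fun _ => 1
  simp only [mul_one, Finset.sum_const, Finset.card_range, nsmul_eq_mul] at this
  rw [this]
  push_cast
  ring

lemma twoPointLaw_mean_sub_bounds {m K L : ℕ} (hL : m + K < L) {p δ M : ℝ} (hδ : 0 ≤ δ)
    (hM : ∑ k ∈ Finset.range L, twoPointLaw m K p δ k * k = M) :
    p * K ≤ M - m ∧ M - m ≤ (p + δ * (K + 1)) * K := by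
  have e : M - m = δ * ∑ i ∈ Finset.range (K + 1), (i : ℝ) + p * K := by
    rw [← hM, sum_twoPointLaw hL]
    push_cast
    rw [Finset.sum_add_distrib, Finset.sum_const, Finset.card_range, nsmul_eq_mul]
    push_cast
    ring
  have h0 : (0 : ℝ) ≤ ∑ i ∈ Finset.range (K + 1), (i : ℝ) := by positivity
  have h1 : ∑ i ∈ Finset.range (K + 1), (i : ℝ) ≤ (K + 1) * K := by
    refine (Finset.sum_le_card_nsmul _ _ (K : ℝ) fun i hi => ?_).trans_eq ?_
    · exact_mod_cast Nat.lt_succ_iff.mp (Finset.mem_range.mp hi)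
    · simp
  rw [e]
  constructor
  · linarith [mul_nonneg hδ h0]
  · linarith [mul_le_mul_of_nonneg_left h1 hδ]

lemma twoPointLaw_variance_bounds {m K L : ℕ} (hL : m + K < L) {p δ M : ℝ} (hp : 0 ≤ p)
    (hδ : 0 ≤ δ) (hpδ : p + δ * (K + 1) ≤ 1)
    (hM : ∑ k ∈ Finset.range L, twoPointLaw m K p δ k * k = M) :
    p * (K * (1 - p - δ * (K + 1))) ^ 2 ≤
        ∑ k ∈ Finset.range L, twoPointLaw m K p δ k * (k - M) ^ 2 ∧
      ∑ k ∈ Finset.range L, twoPointLaw m K p δ k * (k - M) ^ 2 ≤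
        (p + δ * (K + 1) - p ^ 2) * K ^ 2 := by
  obtain ⟨hM1, hM2⟩ := twoPointLaw_mean_sub_bounds hL hδ hM
  have hK : (0 : ℝ) ≤ K := by positivity
  have hq : 0 ≤ 1 - p - δ * (K + 1) := by linarith
  constructor
  · rw [sum_twoPointLaw hL (h := fun k => ((k : ℝ) - M) ^ 2)]
    have h1 : 0 ≤ δ * ∑ i ∈ Finset.range (K + 1), (((m + i : ℕ) : ℝ) - M) ^ 2 :=
      mul_nonneg hδ (Finset.sum_nonneg fun _ _ => sq_nonneg _)
    have h2 : 0 ≤ (1 - p - δ * (K + 1)) * ((m : ℝ) - M) ^ 2 := mul_nonneg hq (sq_nonneg _)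
    have h3 : (K * (1 - p - δ * (K + 1))) ^ 2 ≤ (((m + K : ℕ) : ℝ) - M) ^ 2 := by
      refine pow_le_pow_left₀ (mul_nonneg hK hq) ?_ 2
      push_cast
      linarith
    linarith [mul_le_mul_of_nonneg_left h3 hp]
  · have hone : ∑ k ∈ Finset.range L, twoPointLaw m K p δ k = 1 := sum_twoPointLaw_eq_one hL p δ
    have e : ∑ k ∈ Finset.range L, twoPointLaw m K p δ k * (k - M) ^ 2 =
        ∑ k ∈ Finset.range L, twoPointLaw m K p δ k * (k - m) ^ 2 - (M - m) ^ 2 := by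
      have h : ∀ k : ℕ, twoPointLaw m K p δ k * (k - M) ^ 2 =
          twoPointLaw m K p δ k * (k - m) ^ 2 - 2 * (M - m) * (twoPointLaw m K p δ k * k)
            + (M ^ 2 - m ^ 2) * twoPointLaw m K p δ k := fun k => by ring
      simp only [h, Finset.sum_add_distrib, Finset.sum_sub_distrib, ← Finset.mul_sum, hM, hone]
      ring
    rw [e, sum_twoPointLaw hL (h := fun k => ((k : ℝ) - m) ^ 2)]
    have h1 : ∑ i ∈ Finset.range (K + 1), (((m + i : ℕ) : ℝ) - m) ^ 2 ≤ (K + 1) * K ^ 2 := by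
      refine (Finset.sum_le_card_nsmul _ _ ((K : ℝ) ^ 2) fun i hi => ?_).trans_eq ?_
      · have : (i : ℝ) ≤ K := by exact_mod_cast Nat.lt_succ_iff.mp (Finset.mem_range.mp hi)
        push_cast
        rw [add_sub_cancel_left]
        gcongr
      · simp
    have h2 : (p * K) ^ 2 ≤ (M - m) ^ 2 := pow_le_pow_left₀ (by positivity) hM1 2
    push_cast at h1 ⊢
    rw [sub_self, add_sub_cancel_left]
    linarith [mul_le_mul_of_nonneg_left h1 hδ]

lemma mul_exp_neg_lt_one_div_two_add_sq {α : ℝ} (hα : 0 < α) {c : ℝ}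
    (hc : c < 1 / Real.exp 1) : c * Real.exp (-α) < 1 / (2 + α ^ 2) := by
  have h1 : c * Real.exp (-α) < 1 / Real.exp 1 * Real.exp (-α) :=
    mul_lt_mul_of_pos_right hc (Real.exp_pos _)
  refine h1.trans_le ?_
  rw [Real.exp_neg, ← one_div, one_div_mul_one_div]
  refine one_div_le_one_div_of_le (by positivity) ?_
  have h2 := Real.quadratic_le_exp_of_nonneg hα.le
  have h3 := Real.add_one_le_exp (1 : ℝ)
  nlinarith [mul_le_mul h3 h2 (by positivity) (Real.exp_pos 1).le]

/-- For every `α > 0`, `0 < c < 1/e` and `A < ∞` there is a finite sum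
`X = I₁ + ⋯ + Iₙ` of negatively related indicator variables with
`σ² = Var X > A` and `P(X > EX + a) > c·e^{-a/σ}`, where `σ = √(Var X)` and
`a = α·σ`. Hence Bennett/Bernstein-type bounds with the true variance fail in
general for sums of negatively related indicators. -/
theorem negatively_related_no_gaussian_tail (α : ℝ) (hα : 0 < α)
    (c : ℝ) (hc0 : 0 < c) (hc1 : c < 1 / Real.exp 1) (A : ℝ) :
    ∃ (n : ℕ) (_ : 0 < n) (Ω : Type) (_ : MeasurableSpace Ω) (μ : Measure Ω)
      (_ : IsProbabilityMeasure μ) (I : Fin n → Ω → ℝ),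
      (∀ i, Measurable (I i)) ∧
      (∀ i ω, I i ω = 0 ∨ I i ω = 1) ∧
      NegativelyRelated μ I ∧
      A < variance (fun ω => ∑ i, I i ω) μ ∧
      c * Real.exp (-(α * Real.sqrt (variance (fun ω => ∑ i, I i ω) μ)
            / Real.sqrt (variance (fun ω => ∑ i, I i ω) μ)))
        < (μ {ω | (∫ x, ∑ i, I i x ∂μ)
              + α * Real.sqrt (variance (fun ω => ∑ i, I i ω) μ) < ∑ i, I i ω}).toReal := by
  classical
  obtain ⟨p, hp⟩ : ∃ p : ℝ, p = 1 / (2 + α ^ 2) := ⟨_, rfl⟩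
  have hα2 : 0 < α ^ 2 := by positivity
  have hp0 : 0 < p := by rw [hp]; positivity
  have hpα : p * (2 + α ^ 2) = 1 := by rw [hp]; field_simp
  have hp2 : p < 1 / 2 := by nlinarith
  have hp3 : 0 < p ^ 3 := by positivity
  have hp3' : p ^ 3 < p / 4 := by
    nlinarith [mul_pos hp0 (mul_pos (sub_pos.mpr hp2) (by linarith : 0 < 1 / 2 + p))]
  have hq : 0 < 1 - p - p ^ 3 := by nlinarith
  have hgap : α ^ 2 * (p + p ^ 3 - p ^ 2) < (1 - p - p ^ 3) ^ 2 := by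
    have hαp : α ^ 2 = (1 - 2 * p) / p := by field_simp; linarith
    rw [hαp, div_mul_eq_mul_div, div_lt_iff₀ hp0]
    nlinarith [pow_pos hp0 4, pow_pos hp0 5, pow_pos hp0 6]
  obtain ⟨K₀, hK₀⟩ := exists_nat_gt (A / (p * (1 - p - p ^ 3) ^ 2))
  obtain ⟨K, hK₀K, hK1⟩ : ∃ K : ℕ, K₀ ≤ K ∧ 1 ≤ K :=
    ⟨max K₀ 1, le_max_left _ _, le_max_right _ _⟩
  have hK1' : (1 : ℝ) ≤ K := by exact_mod_cast hK1
  have hKA : A < p * (K * (1 - p - p ^ 3)) ^ 2 := by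
    have h : A / (p * (1 - p - p ^ 3) ^ 2) < K := hK₀.trans_le (by exact_mod_cast hK₀K)
    rw [div_lt_iff₀ (by positivity)] at h
    have h2 : (K : ℝ) * (p * (1 - p - p ^ 3) ^ 2) ≤ K ^ 2 * (p * (1 - p - p ^ 3) ^ 2) :=
      mul_le_mul_of_nonneg_right (by nlinarith) (by positivity)
    linarith
  obtain ⟨δ, hδ⟩ : ∃ δ : ℝ, δ = p ^ 3 / (K + 1) := ⟨_, rfl⟩
  have hδ0 : 0 < δ := by rw [hδ]; positivity
  have hδK : δ * (K + 1) = p ^ 3 := by rw [hδ]; field_simp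
  obtain ⟨m₀, hm₀⟩ := exists_nat_ge (2 * K / δ)
  obtain ⟨m, hm, hm0⟩ : ∃ m : ℕ, 2 * K / δ ≤ m ∧ 0 < m :=
    ⟨m₀ + 1, by push_cast; linarith, by omega⟩
  have hKm : (K : ℝ) / m ≤ δ / 2 := by
    have hm' : (0 : ℝ) < m := by exact_mod_cast hm0
    rw [div_le_iff₀ hδ0] at hm
    rw [div_le_div_iff₀ hm' (by norm_num)]
    linarith
  obtain ⟨N, hN⟩ : ∃ N, N = 2 * (m + K) := ⟨_, rfl⟩
  have hL : m + K < N + 2 := by omega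
  set x := twoPointLaw m K p δ with hxdef
  have hx : ∀ k, 0 ≤ x k := by
    intro k
    simp only [hxdef, twoPointLaw, hδK]
    positivity
  have hsum : ∀ h : ℕ → ℝ, ∑ S : Finset (Fin (N + 1)),
      x S.card / (N + 1).choose S.card * h S.card =
        ∑ k ∈ Finset.range (N + 2), x k * h k := fun h => sum_finset_sizeLaw x h (N + 1)
  have hone : ∑ k ∈ Finset.range (N + 2), x k = 1 :=
    sum_twoPointLaw_eq_one hL p δ
  set w : Finset (Fin (N + 1)) → ℝ := fun S => x S.card / (N + 1).choose S.card with hw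
  have hw0 : ∀ S, 0 ≤ w S := fun S => div_nonneg (hx _) (by positivity)
  have hw1 : ∑ S, w S = 1 := by simpa [hone] using hsum fun _ => 1
  let _ : MeasurableSpace (Finset (Fin (N + 1))) := ⊤
  have hX : ∀ S : Finset (Fin (N + 1)), (∑ i, if i ∈ S then (1 : ℝ) else 0) = S.card := by
    simp
  obtain ⟨M, hM⟩ : ∃ M, ∑ k ∈ Finset.range (N + 2), x k * (k : ℝ) = M := ⟨_, rfl⟩
  have hmean : ∑ S, w S * (S.card : ℝ) = M := (hsum fun k => k).trans hM
  obtain ⟨V, hV⟩ : ∃ V, V = ∑ k ∈ Finset.range (N + 2), x k * ((k : ℝ) - M) ^ 2 := ⟨_, rfl⟩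
  have hvar : variance (fun S : Finset (Fin (N + 1)) => (S.card : ℝ)) (weightedMeasure w) = V := by
    rw [variance_weightedMeasure hw0, hmean, hV, ← hsum fun k => ((k : ℝ) - M) ^ 2]
  obtain ⟨hV1, hV2⟩ := twoPointLaw_variance_bounds hL hp0.le hδ0.le (by rw [hδK]; linarith) hM
  have hM2 := (twoPointLaw_mean_sub_bounds hL hδ0.le hM).2
  rw [← hxdef, ← hV, hδK] at hV1 hV2
  rw [hδK] at hM2
  have hVpos : 0 < V := lt_of_lt_of_le (by positivity) hV1
  have hdev : M + α * √V < (m + K : ℕ) := by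
    have h : α * √V < K * (1 - p - p ^ 3) := by
      refine lt_of_pow_lt_pow_left₀ 2 (by positivity) ?_
      rw [mul_pow, Real.sq_sqrt hVpos.le, mul_pow]
      have hK2 : (0 : ℝ) < K ^ 2 := by positivity
      nlinarith [mul_le_mul_of_nonneg_left hV2 hα2.le, mul_lt_mul_of_pos_right hgap hK2]
    push_cast
    linarith
  refine ⟨N + 1, N.succ_pos, Finset (Fin (N + 1)), inferInstance, weightedMeasure w,
    isProbabilityMeasure_weightedMeasure hw0 hw1, fun i S => if i ∈ S then 1 else 0,
    fun i => Measurable.of_discrete, fun i S => by by_cases h : i ∈ S <;> simp [h],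
    negativelyRelated_of_coupling hw0 hw1 fun j => ?_, ?_, ?_⟩
  · refine exists_isNegativeCoupling_of_interval hx ?_ ?_ hm0 hKm hN.ge hone j
    · intro k hk
      simp only [hxdef, twoPointLaw]
      rw [if_neg (by omega), if_neg (by omega), if_neg (by omega)]
      simp
    · intro k h1 h2
      simp only [hxdef, twoPointLaw, hδK, h1, h2, and_self, if_true, add_assoc]
      refine le_add_of_nonneg_right ?_
      positivity
  · simp only [hX, hvar]
    linarith
  · simp only [hX, hvar]
    rw [integral_weightedMeasure hw0, hmean, mul_div_assoc,
      div_self (Real.sqrt_pos.mpr hVpos).ne', mul_one, ← measureReal_def, weightedMeasure_real hw0]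
    refine (mul_exp_neg_lt_one_div_two_add_sq hα hc1).trans_le ?_
    rw [← hp]
    calc p ≤ x (m + K) := by
          simp only [hxdef, twoPointLaw, hδK, if_true]
          rw [if_pos ⟨Nat.le_add_right _ _, le_rfl⟩]
          have : 0 ≤ if m + K = m then 1 - p - p ^ 3 else 0 := by positivity
          linarith
      _ = ∑ k ∈ Finset.range (N + 2), x k * if k = m + K then 1 else 0 := by
          simp [hL]
      _ = ∑ S, w S * if S.card = m + K then 1 else 0 :=
          (hsum fun k => if k = m + K then 1 else 0).symm
      _ ≤ _ := by
          refine Finset.sum_le_sum fun S _ => ?_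
          by_cases hS : S.card = m + K
          · have : S ∈ {S : Finset (Fin (N + 1)) | M + α * √V < S.card} := by
              simpa [hS] using hdev
            rw [if_pos this, if_pos hS, mul_one]
          · rw [if_neg hS, mul_zero]
            split_ifs
            · exact hw0 S
            · exact le_rfl
end

section
/- Let μ be a finite positive Borel measure on [0,1] with ∫₀¹ x² dμ > 0 and ∫₀¹ (1−x)² dμ > 0. Define m = μ([0,1]), x₀ = (∫₀¹ x² dμ)/(∫₀¹ x dμ), α₀ = (∫₀¹ x dμ)²/(∫₀¹ x² dμ), x₁ = 1 − (∫₀¹ (1−x)² dμ)/(∫₀¹ (1−x) dμ), and α₁ = (∫₀¹ (1−x) dμ)²/(∫₀¹ (1−x)² dμ). If f is a three times continuously differentiable real function on [0,1] with f''' ≥ 0 on [0,1], then (m − α₀)·f(0) + α₀·f(x₀) ≤ ∫₀¹ f dμ ≤ (m − α₁)·f(1) + α₁·f(x₁). If instead f''' ≤ 0 on [0,1], these two inequalities are reversed. -/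
open MeasureTheory

/-- A function on `[0,1]` with convex derivative lies above the quadratic which interpolates it at
`0` and touches it at `c`. -/
lemma exists_quadratic_le_of_convexOn_deriv {f f' : ℝ → ℝ} {c : ℝ} (hc0 : 0 < c) (hc1 : c ≤ 1)
    (hf : ∀ x ∈ Set.Icc (0:ℝ) 1, HasDerivWithinAt f (f' x) (Set.Icc (0:ℝ) 1) x)
    (hf' : ConvexOn ℝ (Set.Icc (0:ℝ) 1) f') :
    ∃ a b : ℝ, (∀ x ∈ Set.Icc (0:ℝ) 1, f 0 + a * x + b * x ^ 2 ≤ f x) ∧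
      f 0 + a * c + b * c ^ 2 = f c := by
  obtain ⟨a, b, hab, hab'⟩ : ∃ a b : ℝ, f 0 + a * c + b * c ^ 2 = f c ∧ f' c = a + b * (2 * c) := by
    refine ⟨2 * ((f c - f 0) / c) - f' c, (f' c - (f c - f 0) / c) / c, ?_, ?_⟩ <;>
      field_simp <;> ring
  refine ⟨a, b, ?_, hab⟩
  set h : ℝ → ℝ := fun x => f x - (f 0 + a * x + b * x ^ 2) with h_def
  set h' : ℝ → ℝ := fun x => f' x - (a + b * (2 * x)) with h'_def
  have hh : ∀ x ∈ Set.Icc (0:ℝ) 1, HasDerivWithinAt h (h' x) (Set.Icc (0:ℝ) 1) x := by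
    intro x hx
    have h₁ : HasDerivAt (fun x : ℝ => f 0 + a * x + b * x ^ 2) (a + b * (2 * x)) x := by
      simpa using (((hasDerivAt_id' x).const_mul a).const_add (f 0)).fun_add
        ((hasDerivAt_pow 2 x).const_mul b)
    exact (hf x hx).sub h₁.hasDerivWithinAt
  have hcont : ContinuousOn h (Set.Icc (0:ℝ) 1) := fun x hx => (hh x hx).continuousWithinAt
  have hder : ∀ x ∈ Set.Ioo (0:ℝ) 1, HasDerivAt h (h' x) x := fun x hx =>
    (hh x (Set.Ioo_subset_Icc_self hx)).hasDerivAt (Icc_mem_nhds hx.1 hx.2)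
  have h'conv : ∀ x ∈ Set.Icc (0:ℝ) 1, ∀ z ∈ Set.Icc (0:ℝ) 1, ∀ y, x < y → y < z →
      (z - x) * h' y ≤ (z - y) * h' x + (y - x) * h' z := by
    intro x hx z hz y hxy hyz
    have hpos : 0 < z - x := by linarith
    have key := hf'.2 hx hz (div_nonneg (sub_nonneg.2 hyz.le) hpos.le)
      (div_nonneg (sub_nonneg.2 hxy.le) hpos.le) (by field_simp; ring)
    have hy : ((z - y) / (z - x)) • x + ((y - x) / (z - x)) • z = y := by
      simp only [smul_eq_mul]; field_simp; ring
    rw [hy] at key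
    have key' := mul_le_mul_of_nonneg_left key hpos.le
    have : (z - x) * (((z - y) / (z - x)) • f' x + ((y - x) / (z - x)) • f' z)
        = (z - y) * f' x + (y - x) * f' z := by
      simp only [smul_eq_mul]; field_simp
    simp only [h'_def]
    linarith
  have h0 : h 0 = 0 := by simp [h_def]
  have hc : h c = 0 := by simp [h_def, hab]
  have h'c : h' c = 0 := by simp [h'_def, hab']
  have hcI : c ∈ Set.Icc (0:ℝ) 1 := ⟨hc0.le, hc1⟩
  obtain ⟨ξ, hξ, hξ0⟩ : ∃ ξ ∈ Set.Ioo 0 c, h' ξ = 0 :=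
    exists_hasDerivAt_eq_zero hc0 (hcont.mono (Set.Icc_subset_Icc_right hc1)) (h0.trans hc.symm)
      fun x hx => hder x ⟨hx.1, hx.2.trans_le hc1⟩
  have hξI : ξ ∈ Set.Icc (0:ℝ) 1 := ⟨hξ.1.le, hξ.2.le.trans hc1⟩
  have mono : ∀ u v : ℝ, 0 ≤ u → v ≤ 1 → (∀ x ∈ Set.Ioo u v, 0 ≤ h' x) →
      MonotoneOn h (Set.Icc u v) := by
    intro u v hu hv hsign
    refine monotoneOn_of_hasDerivWithinAt_nonneg (f' := h') (convex_Icc u v)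
      (hcont.mono (Set.Icc_subset_Icc hu hv)) (fun x hx => ?_) (fun x hx => ?_)
    · rw [interior_Icc] at hx
      exact (hder x ⟨hu.trans_lt hx.1, hx.2.trans_le hv⟩).hasDerivWithinAt
    · rw [interior_Icc] at hx
      exact hsign x hx
  have anti : AntitoneOn h (Set.Icc ξ c) := by
    refine antitoneOn_of_hasDerivWithinAt_nonpos (f' := h') (convex_Icc ξ c)
      (hcont.mono (Set.Icc_subset_Icc hξ.1.le hc1)) (fun x hx => ?_) (fun x hx => ?_)
    · rw [interior_Icc] at hx
      exact (hder x ⟨hξ.1.trans hx.1, hx.2.trans_le hc1⟩).hasDerivWithinAt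
    · rw [interior_Icc] at hx
      have := h'conv ξ hξI c hcI x hx.1 hx.2
      rw [hξ0, h'c] at this
      by_contra! hpos
      have := mul_pos (sub_pos.2 hξ.2) hpos
      linarith
  have left : MonotoneOn h (Set.Icc 0 ξ) := by
    refine mono 0 ξ le_rfl hξI.2 fun x hx => ?_
    have := h'conv x ⟨hx.1.le, hx.2.le.trans hξI.2⟩ c hcI ξ hx.2 hξ.2
    rw [hξ0, h'c] at this
    by_contra! hneg
    have := mul_neg_of_pos_of_neg (sub_pos.2 hξ.2) hneg
    linarith
  have right : MonotoneOn h (Set.Icc c 1) := by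
    refine mono c 1 hc0.le le_rfl fun x hx => ?_
    have := h'conv ξ hξI x ⟨hc0.le.trans hx.1.le, hx.2.le⟩ c hξ.2 hx.1
    rw [hξ0, h'c] at this
    by_contra! hneg
    have := mul_neg_of_pos_of_neg (sub_pos.2 hξ.2) hneg
    linarith
  intro x hx
  suffices 0 ≤ h x by simpa [h_def] using this
  rcases le_total x ξ with hxξ | hξx
  · exact h0.symm.le.trans (left ⟨le_rfl, hξ.1.le⟩ ⟨hx.1, hxξ⟩ hx.1)
  rcases le_total x c with hxc | hcx
  · exact hc.symm.le.trans (anti ⟨hξx, hxc⟩ ⟨hξ.2.le, le_rfl⟩ hxc)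
  · exact hc.symm.le.trans (right ⟨le_rfl, hc1⟩ ⟨hcx, hx.2⟩ hcx)

/-- The integral of `f ∘ u` is bounded below by its value for the measure carried by `0` and
one other point with the same first three moments of `u`, when `f` has convex derivative. -/
lemma moment_matching_le_integral_comp (μ : Measure ℝ) [IsFiniteMeasure μ] {u f f' : ℝ → ℝ}
    (hu : Continuous u) (hmaps : Set.MapsTo u (Set.Icc (0:ℝ) 1) (Set.Icc (0:ℝ) 1))
    (hu2 : 0 < ∫ x in Set.Icc (0:ℝ) 1, u x ^ 2 ∂μ)
    (hf : ∀ x ∈ Set.Icc (0:ℝ) 1, HasDerivWithinAt f (f' x) (Set.Icc (0:ℝ) 1) x)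
    (hf' : ConvexOn ℝ (Set.Icc (0:ℝ) 1) f') :
    (μ.real (Set.Icc (0:ℝ) 1) - (∫ x in Set.Icc (0:ℝ) 1, u x ∂μ) ^ 2
        / (∫ x in Set.Icc (0:ℝ) 1, u x ^ 2 ∂μ)) * f 0
      + (∫ x in Set.Icc (0:ℝ) 1, u x ∂μ) ^ 2 / (∫ x in Set.Icc (0:ℝ) 1, u x ^ 2 ∂μ)
        * f ((∫ x in Set.Icc (0:ℝ) 1, u x ^ 2 ∂μ) / (∫ x in Set.Icc (0:ℝ) 1, u x ∂μ))
      ≤ ∫ x in Set.Icc (0:ℝ) 1, f (u x) ∂μ := by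
  have int {g : ℝ → ℝ} (hg : ContinuousOn g (Set.Icc (0:ℝ) 1)) :
      IntegrableOn g (Set.Icc (0:ℝ) 1) μ := hg.integrableOn_compact isCompact_Icc
  have int1 : IntegrableOn u (Set.Icc (0:ℝ) 1) μ := int hu.continuousOn
  have int2 : IntegrableOn (fun x => u x ^ 2) (Set.Icc (0:ℝ) 1) μ := int (hu.pow 2).continuousOn
  have hle : ∫ x in Set.Icc (0:ℝ) 1, u x ^ 2 ∂μ ≤ ∫ x in Set.Icc (0:ℝ) 1, u x ∂μ := by
    refine setIntegral_mono_on int2 int1 measurableSet_Icc fun x hx => ?_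
    have := hmaps hx
    nlinarith [this.1, this.2]
  have intf : IntegrableOn (fun x => f (u x)) (Set.Icc (0:ℝ) 1) μ :=
    int (ContinuousOn.comp (t := Set.Icc (0:ℝ) 1)
      (fun x hx => (hf x hx).continuousWithinAt) hu.continuousOn hmaps)
  have quad (a b : ℝ) : ∫ x in Set.Icc (0:ℝ) 1, (f 0 + a * u x + b * u x ^ 2) ∂μ
      = μ.real (Set.Icc (0:ℝ) 1) * f 0 + a * (∫ x in Set.Icc (0:ℝ) 1, u x ∂μ)
        + b * ∫ x in Set.Icc (0:ℝ) 1, u x ^ 2 ∂μ := by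
    rw [integral_add (int (by fun_prop)) (int2.const_mul b),
      integral_add (integrable_const _) (int1.const_mul a), integral_const_mul,
      integral_const_mul, setIntegral_const, smul_eq_mul]
  have quad_le (a b : ℝ) (hab : ∀ x ∈ Set.Icc (0:ℝ) 1, f 0 + a * x + b * x ^ 2 ≤ f x) :
      ∫ x in Set.Icc (0:ℝ) 1, (f 0 + a * u x + b * u x ^ 2) ∂μ
        ≤ ∫ x in Set.Icc (0:ℝ) 1, f (u x) ∂μ :=
    setIntegral_mono_on (int (by fun_prop)) intf measurableSet_Icc fun x hx => hab _ (hmaps hx)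
  set M₁ := ∫ x in Set.Icc (0:ℝ) 1, u x ∂μ
  set M₂ := ∫ x in Set.Icc (0:ℝ) 1, u x ^ 2 ∂μ
  have hM₁ : 0 < M₁ := hu2.trans_le hle
  obtain ⟨a, b, hab, hc⟩ := exists_quadratic_le_of_convexOn_deriv (div_pos hu2 hM₁)
    ((div_le_one hM₁).2 hle) hf hf'
  refine le_trans (le_of_eq ?_) ((quad a b).symm.le.trans (quad_le a b hab))
  rw [← hc]
  field_simp
  ring

/-- A nonnegative third derivative makes the first derivative convex. -/
lemma convexOn_derivWithin_of_iteratedDerivWithin_three_nonneg {f : ℝ → ℝ}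
    (hf : ContDiffOn ℝ 3 f (Set.Icc (0:ℝ) 1))
    (h3 : ∀ x ∈ Set.Icc (0:ℝ) 1, 0 ≤ iteratedDerivWithin 3 f (Set.Icc (0:ℝ) 1) x) :
    ConvexOn ℝ (Set.Icc (0:ℝ) 1) (derivWithin f (Set.Icc (0:ℝ) 1)) := by
  have hU : UniqueDiffOn ℝ (Set.Icc (0:ℝ) 1) := uniqueDiffOn_Icc zero_lt_one
  have hd1 := hf.differentiableOn_iteratedDerivWithin (m := 1) (by norm_num) hU
  have hd2 := hf.differentiableOn_iteratedDerivWithin (m := 2) (by norm_num) hU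
  rw [← iteratedDerivWithin_one]
  refine convexOn_of_hasDerivWithinAt2_nonneg (convex_Icc 0 1) hd1.continuousOn
    (f' := iteratedDerivWithin 2 f (Set.Icc (0:ℝ) 1))
    (f'' := iteratedDerivWithin 3 f (Set.Icc (0:ℝ) 1)) ?_ ?_ fun x hx => h3 x (interior_subset hx)
  · intro x hx
    rw [iteratedDerivWithin_succ (n := 1)]
    exact (hd1 x (interior_subset hx)).hasDerivWithinAt.mono interior_subset
  · intro x hx
    rw [iteratedDerivWithin_succ (n := 2)]
    exact (hd2 x (interior_subset hx)).hasDerivWithinAt.mono interior_subset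

/-- Two-sided bound for the integral of a function with nonnegative third derivative. -/
lemma moment_matching_le_integral_le (μ : Measure ℝ) [IsFiniteMeasure μ] {f : ℝ → ℝ}
    (hx2 : 0 < ∫ x in Set.Icc (0:ℝ) 1, x ^ 2 ∂μ)
    (h1x2 : 0 < ∫ x in Set.Icc (0:ℝ) 1, (1 - x) ^ 2 ∂μ)
    (hf : ContDiffOn ℝ 3 f (Set.Icc (0:ℝ) 1))
    (h3 : ∀ x ∈ Set.Icc (0:ℝ) 1, 0 ≤ iteratedDerivWithin 3 f (Set.Icc (0:ℝ) 1) x) :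
    (μ.real (Set.Icc (0:ℝ) 1) - (∫ x in Set.Icc (0:ℝ) 1, x ∂μ) ^ 2
        / (∫ x in Set.Icc (0:ℝ) 1, x ^ 2 ∂μ)) * f 0
      + (∫ x in Set.Icc (0:ℝ) 1, x ∂μ) ^ 2 / (∫ x in Set.Icc (0:ℝ) 1, x ^ 2 ∂μ)
        * f ((∫ x in Set.Icc (0:ℝ) 1, x ^ 2 ∂μ) / (∫ x in Set.Icc (0:ℝ) 1, x ∂μ))
      ≤ ∫ x in Set.Icc (0:ℝ) 1, f x ∂μ ∧
    ∫ x in Set.Icc (0:ℝ) 1, f x ∂μ ≤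
      (μ.real (Set.Icc (0:ℝ) 1) - (∫ x in Set.Icc (0:ℝ) 1, (1 - x) ∂μ) ^ 2
        / (∫ x in Set.Icc (0:ℝ) 1, (1 - x) ^ 2 ∂μ)) * f 1
      + (∫ x in Set.Icc (0:ℝ) 1, (1 - x) ∂μ) ^ 2 / (∫ x in Set.Icc (0:ℝ) 1, (1 - x) ^ 2 ∂μ)
        * f (1 - (∫ x in Set.Icc (0:ℝ) 1, (1 - x) ^ 2 ∂μ)
          / (∫ x in Set.Icc (0:ℝ) 1, (1 - x) ∂μ)) := by
  have hconv := convexOn_derivWithin_of_iteratedDerivWithin_three_nonneg hf h3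
  have hder : ∀ x ∈ Set.Icc (0:ℝ) 1,
      HasDerivWithinAt f (derivWithin f (Set.Icc (0:ℝ) 1) x) (Set.Icc (0:ℝ) 1) x := fun x hx =>
    (hf.differentiableOn (by norm_num) x hx).hasDerivWithinAt
  have hmaps : Set.MapsTo (fun x : ℝ => 1 - x) (Set.Icc (0:ℝ) 1) (Set.Icc (0:ℝ) 1) :=
    fun x hx => ⟨by linarith [hx.2], by linarith [hx.1]⟩
  refine ⟨moment_matching_le_integral_comp μ continuous_id (Set.mapsTo_id _) hx2 hder hconv, ?_⟩
  have hder' : ∀ x ∈ Set.Icc (0:ℝ) 1, HasDerivWithinAt (fun x => - f (1 - x))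
      (derivWithin f (Set.Icc (0:ℝ) 1) (1 - x)) (Set.Icc (0:ℝ) 1) x := by
    intro x hx
    have h := ((hder (1 - x) (hmaps hx)).scomp x
      ((hasDerivWithinAt_id x _).const_sub 1) hmaps).fun_neg
    simpa [Function.comp_def] using h
  have hconv' : ConvexOn ℝ (Set.Icc (0:ℝ) 1)
      (fun x => derivWithin f (Set.Icc (0:ℝ) 1) (1 - x)) := by
    refine ⟨convex_Icc 0 1, fun x hx y hy a b ha hb hab => ?_⟩
    have h := hconv.2 (hmaps hx) (hmaps hy) ha hb hab
    have heq : a • (1 - x) + b • (1 - y) = 1 - (a • x + b • y) := by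
      simp only [smul_eq_mul]
      linear_combination hab
    rwa [heq] at h
  have h := moment_matching_le_integral_comp μ (u := fun x => 1 - x) (by fun_prop) hmaps h1x2
    hder' hconv'
  simp only [sub_sub_cancel, sub_zero, integral_neg] at h
  linarith

/-- An analogue of Jensen's inequality with a sign condition on the third derivative.
Let `μ` be a finite positive Borel measure on `[0,1]` (here: a finite measure on `ℝ`
vanishing outside `[0,1]`) with `∫ x² dμ > 0` and `∫ (1-x)² dμ > 0`, and set
`m = μ([0,1])`, `x₀ = ∫x²dμ / ∫xdμ`, `α₀ = (∫xdμ)² / ∫x²dμ`,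
`x₁ = 1 - ∫(1-x)²dμ / ∫(1-x)dμ`, `α₁ = (∫(1-x)dμ)² / ∫(1-x)²dμ`.
If `f` is three times continuously differentiable on `[0,1]` with `f''' ≥ 0` there, then
`(m - α₀)f(0) + α₀f(x₀) ≤ ∫₀¹ f dμ ≤ (m - α₁)f(1) + α₁f(x₁)`;
if instead `f''' ≤ 0` on `[0,1]`, both inequalities are reversed. -/
theorem jensen_third_derivative (μ : Measure ℝ) [IsFiniteMeasure μ]
    (hsupp : μ (Set.Icc (0:ℝ) 1)ᶜ = 0)
    (hx2 : 0 < ∫ x in Set.Icc (0:ℝ) 1, x ^ 2 ∂μ)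
    (h1x2 : 0 < ∫ x in Set.Icc (0:ℝ) 1, (1 - x) ^ 2 ∂μ)
    (m x₀ α₀ x₁ α₁ : ℝ)
    (hm : m = (μ (Set.Icc (0:ℝ) 1)).toReal)
    (hx₀ : x₀ = (∫ x in Set.Icc (0:ℝ) 1, x ^ 2 ∂μ) / (∫ x in Set.Icc (0:ℝ) 1, x ∂μ))
    (hα₀ : α₀ = (∫ x in Set.Icc (0:ℝ) 1, x ∂μ) ^ 2 / (∫ x in Set.Icc (0:ℝ) 1, x ^ 2 ∂μ))
    (hx₁ : x₁ = 1 - (∫ x in Set.Icc (0:ℝ) 1, (1 - x) ^ 2 ∂μ)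
        / (∫ x in Set.Icc (0:ℝ) 1, (1 - x) ∂μ))
    (hα₁ : α₁ = (∫ x in Set.Icc (0:ℝ) 1, (1 - x) ∂μ) ^ 2
        / (∫ x in Set.Icc (0:ℝ) 1, (1 - x) ^ 2 ∂μ))
    (f : ℝ → ℝ) (hf : ContDiffOn ℝ 3 f (Set.Icc (0:ℝ) 1)) :
    ((∀ x ∈ Set.Icc (0:ℝ) 1, 0 ≤ iteratedDerivWithin 3 f (Set.Icc (0:ℝ) 1) x) →
      (m - α₀) * f 0 + α₀ * f x₀ ≤ ∫ x in Set.Icc (0:ℝ) 1, f x ∂μ ∧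
        ∫ x in Set.Icc (0:ℝ) 1, f x ∂μ ≤ (m - α₁) * f 1 + α₁ * f x₁) ∧
    ((∀ x ∈ Set.Icc (0:ℝ) 1, iteratedDerivWithin 3 f (Set.Icc (0:ℝ) 1) x ≤ 0) →
      (m - α₁) * f 1 + α₁ * f x₁ ≤ ∫ x in Set.Icc (0:ℝ) 1, f x ∂μ ∧
        ∫ x in Set.Icc (0:ℝ) 1, f x ∂μ ≤ (m - α₀) * f 0 + α₀ * f x₀) := by
  subst hm hx₀ hα₀ hx₁ hα₁
  refine ⟨fun h3 => moment_matching_le_integral_le μ hx2 h1x2 hf h3, fun h3 => ?_⟩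
  have h := moment_matching_le_integral_le μ hx2 h1x2 hf.neg fun x hx => by
    rw [iteratedDerivWithin_fun_neg]
    exact neg_nonneg.2 (h3 x hx)
  simp only [integral_neg, Measure.real] at h
  constructor <;> linarith [h.1, h.2]
end

section
/- Define g(x,y) = (1/(1−x))·(1 + y − xy)·ln(1 + y − xy) + (1/x)·(1 − xy)·ln(1 − xy), with the convention that (1 − xy)·ln(1 − xy) = 0 when xy = 1. Then g(x,y) is an increasing function of x on the region U = { (x,y) : 0 < x < 1, 0 ≤ y ≤ 1/x }; that is, for all real x₁, x₂, y with 0 < x₁ ≤ x₂ < 1 and 0 ≤ y ≤ 1/x₂, one has g(x₁, y) ≤ g(x₂, y). -/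
theorem sub_sq_div_two_le_log_one_add {u : ℝ} (hu : 0 ≤ u) :
    u - u ^ 2 / 2 ≤ Real.log (1 + u) := by
  refine le_trans ?_ (Real.le_log_one_add_of_nonneg hu)
  rw [le_div_iff₀ (by linarith)]
  nlinarith [pow_nonneg hu 3]

theorem log_one_sub_le_neg_sub_sq_div_two {v : ℝ} (hv0 : 0 ≤ v) (hv1 : v < 1) :
    Real.log (1 - v) ≤ -v - v ^ 2 / 2 := by
  have hpos : 0 < 1 - v := by linarith
  have h := Real.le_log_one_add_of_nonneg (div_nonneg hv0 hpos.le)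
  have hinv : 1 + v / (1 - v) = (1 - v)⁻¹ := by field_simp; ring
  have hfrac : 2 * (v / (1 - v)) / (v / (1 - v) + 2) = 2 * v / (2 - v) := by
    have : 2 - v ≠ 0 := by linarith
    have : v + (1 - v) * 2 ≠ 0 := by linarith
    field_simp
    ring
  rw [hinv, Real.log_inv, hfrac] at h
  have hle : v + v ^ 2 / 2 ≤ 2 * v / (2 - v) := by
    rw [le_div_iff₀ (by linarith)]
    nlinarith [pow_nonneg hv0 3]
  linarith

/-- The `x`-derivative of `g(x,y)` in the interior of the region. -/
theorem hasDerivAt_g {x y : ℝ} (hx0 : x ≠ 0) (hx1 : 1 - x ≠ 0)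
    (hA : 1 + y - x * y ≠ 0) (hB : 1 - x * y ≠ 0) :
    HasDerivAt (fun x : ℝ => (1 / (1 - x)) * (1 + y - x * y) * Real.log (1 + y - x * y)
        + (1 / x) * (1 - x * y) * Real.log (1 - x * y))
      ((Real.log (1 + y - x * y) - (1 - x) * y) / (1 - x) ^ 2
        + (-Real.log (1 - x * y) - x * y) / x ^ 2) x := by
  have hid := hasDerivAt_id' x
  have hAd : HasDerivAt (fun x : ℝ => 1 + y - x * y) (-(1 * y)) x :=
    (hid.mul_const y).const_sub (1 + y)
  have hBd : HasDerivAt (fun x : ℝ => 1 - x * y) (-(1 * y)) x :=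
    (hid.mul_const y).const_sub 1
  have h1 := (((hasDerivAt_const x (1 : ℝ)).fun_div (hid.const_sub 1) hx1).fun_mul hAd).fun_mul
    (hAd.log hA)
  have h2 := (((hasDerivAt_const x (1 : ℝ)).fun_div hid hx0).fun_mul hBd).fun_mul (hBd.log hB)
  refine (h1.fun_add h2).congr_deriv ?_
  generalize Real.log (1 + y - x * y) = a
  generalize Real.log (1 - x * y) = b
  field_simp
  ring

/-- The function
`g(x,y) = (1/(1-x))(1 + y - xy)·log(1 + y - xy) + (1/x)(1 - xy)·log(1 - xy)`
(with the convention `(1 - xy)·log(1 - xy) = 0` when `xy = 1`, which is automatic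
since `Real.log 0 = 0`) is increasing in `x` on
`U = {(x,y) : 0 < x < 1, 0 ≤ y ≤ 1/x}`: if `0 < x₁ ≤ x₂ < 1` and `0 ≤ y ≤ 1/x₂`,
then `g(x₁,y) ≤ g(x₂,y)`. -/
theorem g_increasing_in_x (x₁ x₂ y : ℝ) (hx₁ : 0 < x₁) (hx₁₂ : x₁ ≤ x₂) (hx₂ : x₂ < 1)
    (hy0 : 0 ≤ y) (hy : y ≤ 1 / x₂) :
    (1 / (1 - x₁)) * (1 + y - x₁ * y) * Real.log (1 + y - x₁ * y)
        + (1 / x₁) * (1 - x₁ * y) * Real.log (1 - x₁ * y)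
      ≤ (1 / (1 - x₂)) * (1 + y - x₂ * y) * Real.log (1 + y - x₂ * y)
        + (1 / x₂) * (1 - x₂ * y) * Real.log (1 - x₂ * y) := by
  have hx₂0 : 0 < x₂ := hx₁.trans_le hx₁₂
  have hxy : x₂ * y ≤ 1 := by
    rw [le_div_iff₀ hx₂0] at hy
    linarith
  have hmono : MonotoneOn (fun x : ℝ => (1 / (1 - x)) * (1 + y - x * y) *
      Real.log (1 + y - x * y) + (1 / x) * (1 - x * y) * Real.log (1 - x * y))
      (Set.Icc x₁ x₂) := by
    refine monotoneOn_of_hasDerivWithinAt_nonneg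
      (f' := fun x => (Real.log (1 + y - x * y) - (1 - x) * y) / (1 - x) ^ 2
        + (-Real.log (1 - x * y) - x * y) / x ^ 2) (convex_Icc x₁ x₂) ?_ ?_ ?_
    · have hA := Real.continuous_mul_log.comp (by fun_prop : Continuous fun x : ℝ => 1 + y - x * y)
      have hB := Real.continuous_mul_log.comp (by fun_prop : Continuous fun x : ℝ => 1 - x * y)
      simp only [mul_assoc]
      refine ContinuousOn.add (ContinuousOn.mul ?_ hA.continuousOn)
        (ContinuousOn.mul ?_ hB.continuousOn)
      · exact continuousOn_const.div (by fun_prop) fun x hx => by linarith [hx.2]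
      · exact continuousOn_const.div (by fun_prop) fun x hx => by linarith [hx.1]
    all_goals
      intro x hx
      rw [interior_Icc] at hx
      have hx0 : 0 < x := hx₁.trans hx.1
      have hx1 : 0 < 1 - x := by linarith [hx.2]
      have hu : 0 ≤ (1 - x) * y := mul_nonneg hx1.le hy0
      have hv : 0 ≤ x * y := mul_nonneg hx0.le hy0
      have hv1 : x * y < 1 := by
        rcases hy0.eq_or_lt with rfl | hy0
        · simp
        · nlinarith [hx.2]
    · exact (hasDerivAt_g hx0.ne' hx1.ne' (by linarith) (by linarith)).hasDerivWithinAt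
    · have hlogA := sub_sq_div_two_le_log_one_add hu
      have hlogB := log_one_sub_le_neg_sub_sq_div_two hv hv1
      rw [show 1 + (1 - x) * y = 1 + y - x * y by ring] at hlogA
      have hA : -(y ^ 2 / 2) ≤ (Real.log (1 + y - x * y) - (1 - x) * y) / (1 - x) ^ 2 := by
        rw [le_div_iff₀ (by positivity)]
        linarith
      have hB : y ^ 2 / 2 ≤ (-Real.log (1 - x * y) - x * y) / x ^ 2 := by
        rw [le_div_iff₀ (by positivity)]
        linarith
      linarith
  exact hmono ⟨le_rfl, hx₁₂⟩ ⟨hx₁₂, le_rfl⟩ hx₁₂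
end
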